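/- arXiv:1603.04462 — 3 statements merged into one kernel-verified Lean document; each statement's English description precedes it below -/
import Mathlib

section
/- For all γ > 0 and α > 0 there exist integers p and n₀ such that for n > n₀ the following holds. Suppose H is a 3-uniform hypergraph on n vertices with δ₁(H) ≥ (7/16 + γ)·C(n,2). Then there is a family of at most p pairwise vertex-disjoint loose paths in H which covers all but at most αn vertices of H. -/
open Finset

/-- `f` describes a loose path with `k ≥ 1` edges in the `3`-uniform hypergraph `H`:
the vertices `f 0, f 1, …, f (2k)` are distinct, and for every `i < k` the triple
`{f (2i), f (2i+1), f (2i+2)}` is an edge of `H`. -/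
def IsLoosePath {V : Type} [DecidableEq V] (H : Finset (Finset V)) (k : ℕ) (f : ℕ → V) :
    Prop :=
  1 ≤ k ∧
  (∀ i ≤ 2 * k, ∀ j ≤ 2 * k, f i = f j → i = j) ∧
  ∀ i < k, ({f (2 * i), f (2 * i + 1), f (2 * i + 2)} : Finset V) ∈ H

/-- The vertex set of the loose path described by `f` with `k` edges. -/
def pathVerts {V : Type} [DecidableEq V] (k : ℕ) (f : ℕ → V) : Finset V :=
  (Finset.range (2 * k + 1)).image f

/-! ### Averaging over the cells of a colouring -/

noncomputable def cellAv {Ω κ : Type} [Fintype Ω] [DecidableEq κ] (f : Ω → ℝ) (C : Ω → κ)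
    (k : κ) : ℝ :=
  (∑ w ∈ univ.filter (fun w => C w = k), f w) / ((univ.filter (fun w => C w = k)).card : ℝ)

lemma cellAv_mul_card {Ω κ : Type} [Fintype Ω] [DecidableEq κ] (f : Ω → ℝ) (C : Ω → κ) (k : κ) :
    cellAv f C k * ((univ.filter (fun w => C w = k)).card : ℝ) =
      ∑ w ∈ univ.filter (fun w => C w = k), f w := by
  unfold cellAv
  by_cases h : (univ.filter (fun w => C w = k)) = ∅
  · simp [h]
  · have : ((univ.filter (fun w => C w = k)).card : ℝ) ≠ 0 := by
      simpa using h
    field_simp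

lemma sum_cellAv {Ω κ : Type} [Fintype Ω] [Fintype κ] [DecidableEq κ] (f : Ω → ℝ) (C : Ω → κ)
    (g : κ → ℝ) : ∑ w, cellAv f C (C w) * g (C w) = ∑ w, f w * g (C w) := by
  rw [← Finset.sum_fiberwise univ C, ← Finset.sum_fiberwise univ C (fun w => f w * g (C w))]
  refine Finset.sum_congr rfl fun k _ => ?_
  have h1 : ∑ w ∈ univ.filter (fun w => C w = k), cellAv f C (C w) * g (C w)
      = ∑ w ∈ univ.filter (fun w => C w = k), cellAv f C k * g k := by
    refine Finset.sum_congr rfl fun w hw => ?_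
    rw [(Finset.mem_filter.1 hw).2]
  have h2 : ∑ w ∈ univ.filter (fun w => C w = k), f w * g (C w)
      = ∑ w ∈ univ.filter (fun w => C w = k), f w * g k := by
    refine Finset.sum_congr rfl fun w hw => ?_
    rw [(Finset.mem_filter.1 hw).2]
  rw [h1, h2, Finset.sum_const, nsmul_eq_mul, ← Finset.sum_mul, ← cellAv_mul_card]
  ring

lemma energy_pyth {Ω κ κ' : Type} [Fintype Ω] [Fintype κ] [DecidableEq κ] [Fintype κ']
    [DecidableEq κ'] (f : Ω → ℝ) (C : Ω → κ) (C' : Ω → κ') (π : κ' → κ) (h : ∀ w, π (C' w) = C w) :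
    ∑ w, (cellAv f C' (C' w)) ^ 2 = ∑ w, (cellAv f C (C w)) ^ 2 +
      ∑ w, (cellAv f C' (C' w) - cellAv f C (C w)) ^ 2 := by
  have h1 : ∑ w, cellAv f C' (C' w) * cellAv f C (C w) = ∑ w, (cellAv f C (C w)) ^ 2 := by
    have e1 := sum_cellAv f C' (fun k => cellAv f C (π k))
    have e2 := sum_cellAv f C (fun k => cellAv f C k)
    simp only [h] at e1
    rw [e1, ← e2]
    exact Finset.sum_congr rfl fun w _ => by ring
  have h2 : ∑ w, (cellAv f C' (C' w) - cellAv f C (C w)) ^ 2 =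
      ∑ w, (cellAv f C' (C' w)) ^ 2 - 2 * ∑ w, cellAv f C' (C' w) * cellAv f C (C w)
        + ∑ w, (cellAv f C (C w)) ^ 2 := by
    rw [Finset.mul_sum, ← Finset.sum_sub_distrib, ← Finset.sum_add_distrib]
    exact Finset.sum_congr rfl fun w _ => by ring
  rw [h2, h1]; ring

lemma cellAv_nonneg {Ω κ : Type} [Fintype Ω] [DecidableEq κ] (f : Ω → ℝ) (C : Ω → κ)
    (hf : ∀ w, 0 ≤ f w) (k : κ) : 0 ≤ cellAv f C k :=
  div_nonneg (Finset.sum_nonneg fun w _ => hf w) (Nat.cast_nonneg _)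

lemma cellAv_le_one {Ω κ : Type} [Fintype Ω] [DecidableEq κ] (f : Ω → ℝ) (C : Ω → κ)
    (hf : ∀ w, f w ≤ 1) (k : κ) : cellAv f C k ≤ 1 := by
  unfold cellAv
  refine div_le_one_of_le₀ ?_ (Nat.cast_nonneg _)
  calc _ ≤ ∑ w ∈ univ.filter (fun w => C w = k), (1 : ℝ) := Finset.sum_le_sum fun w _ => hf w
    _ = _ := by simp

lemma energy_le {Ω κ : Type} [Fintype Ω] [DecidableEq κ] (f : Ω → ℝ) (C : Ω → κ)
    (hf0 : ∀ w, 0 ≤ f w) (hf1 : ∀ w, f w ≤ 1) :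
    ∑ w, (cellAv f C (C w)) ^ 2 ≤ Fintype.card Ω := by
  calc _ ≤ ∑ w : Ω, (1 : ℝ) := Finset.sum_le_sum fun w _ =>
        pow_le_one₀ (cellAv_nonneg f C hf0 _) (cellAv_le_one f C hf1 _)
    _ = _ := by simp

lemma witness_gain {Ω κ κ' : Type} [Fintype Ω] [DecidableEq Ω] [Fintype κ] [DecidableEq κ]
    [Fintype κ']
    [DecidableEq κ'] (f : Ω → ℝ) (C : Ω → κ) (C' : Ω → κ') (S : Finset Ω) (s : κ' → Prop)
    (hs : ∀ w, w ∈ S ↔ s (C' w)) (t : κ) (hS : ∀ w ∈ S, C w = t) (ε : ℝ) (hε : 0 < ε)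
    (hw : ∑ w ∈ S, f w ≤ (cellAv f C t - ε) * S.card) :
    ε ^ 2 * S.card ≤ ∑ w ∈ S, (cellAv f C' (C' w) - cellAv f C (C w)) ^ 2 := by
  classical
  have h1 : ∑ w ∈ S, cellAv f C' (C' w) = ∑ w ∈ S, f w := by
    have e := sum_cellAv f C' (fun k => if s k then 1 else 0)
    simp only [← hs, mul_ite, mul_one, mul_zero, ← Finset.sum_filter] at e
    simpa using e
  have h2 : ∑ w ∈ S, cellAv f C (C w) = cellAv f C t * S.card := by
    rw [Finset.sum_congr rfl fun w hw => by rw [hS w hw]]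
    simp [mul_comm]
  have h3 : ∑ w ∈ S, (cellAv f C' (C' w) - cellAv f C (C w)) ≤ - (ε * S.card) := by
    rw [Finset.sum_sub_distrib, h1, h2]; linarith
  have h4 := sq_sum_le_card_mul_sum_sq (s := S)
    (f := fun w => cellAv f C' (C' w) - cellAv f C (C w))
  rcases Nat.eq_zero_or_pos S.card with h0 | h0
  · rw [Finset.card_eq_zero] at h0; simp [h0]
  have h5 : (0 : ℝ) < S.card := by exact_mod_cast h0
  have h6 : (ε * S.card) ^ 2 ≤ (∑ w ∈ S, (cellAv f C' (C' w) - cellAv f C (C w))) ^ 2 := by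
    nlinarith [mul_pos hε h5]
  have h7 : (S.card : ℝ) * (ε ^ 2 * S.card) ≤
      S.card * ∑ w ∈ S, (cellAv f C' (C' w) - cellAv f C (C w)) ^ 2 := by
    calc _ = (ε * S.card) ^ 2 := by ring
      _ ≤ _ := h6.trans h4
  exact le_of_mul_le_mul_left h7 h5

/-- colour class -/
def cls {V ι : Type} [Fintype V] [DecidableEq ι] (c : V → ι) (i : ι) : Finset V :=
  univ.filter (fun v => c v = i)

def tcol {V ι : Type} (c : V → ι) (w : V × V × V) : ι × ι × ι := (c w.1, c w.2.1, c w.2.2)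

/-- lower regularity of a cell -/
def LReg {V ι : Type} [Fintype V] [DecidableEq ι] (ε : ℝ) (f : V × V × V → ℝ)
    (c : V → ι) (t : ι × ι × ι) : Prop :=
  ∀ X Y Z : Finset V, X ⊆ cls c t.1 → Y ⊆ cls c t.2.1 → Z ⊆ cls c t.2.2 →
    ε * (cls c t.1).card ≤ X.card → ε * (cls c t.2.1).card ≤ Y.card →
    ε * (cls c t.2.2).card ≤ Z.card →
    (cellAv f (tcol c) t - ε) * ((X.card : ℝ) * Y.card * Z.card) ≤ ∑ w ∈ X ×ˢ Y ×ˢ Z, f w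

lemma tcol_fiber {V ι : Type} [Fintype V] [DecidableEq V] [DecidableEq ι] (c : V → ι)
    (t : ι × ι × ι) :
    univ.filter (fun w => tcol c w = t) = cls c t.1 ×ˢ cls c t.2.1 ×ˢ cls c t.2.2 := by
  ext w
  simp [tcol, cls, Prod.ext_iff]

def cellN {V ι : Type} [Fintype V] [DecidableEq ι] (c : V → ι) (t : ι × ι × ι) : ℝ :=
  ((cls c t.1).card : ℝ) * (cls c t.2.1).card * (cls c t.2.2).card

open Classical in
lemma energy_step {V ι : Type} [Fintype V] [DecidableEq V] [Fintype ι] [DecidableEq ι]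
    (ε : ℝ) (hε : 0 < ε) (f : V × V × V → ℝ) (c : V → ι)
    (hbad : ε * (Fintype.card V : ℝ) ^ 3 <
      ∑ t ∈ univ.filter (fun t => ¬ LReg ε f c t), cellN c t) :
    ∃ c' : V → ι × (ι × ι × ι → Bool × Bool × Bool),
      ∑ w, (cellAv f (tcol c) (tcol c w)) ^ 2 + ε ^ 6 * (Fintype.card V : ℝ) ^ 3 ≤
        ∑ w, (cellAv f (tcol c') (tcol c' w)) ^ 2 := by
  have hw : ∀ t, ¬ LReg ε f c t → ∃ X Y Z : Finset V, X ⊆ cls c t.1 ∧ Y ⊆ cls c t.2.1 ∧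
      Z ⊆ cls c t.2.2 ∧
      ε * (cls c t.1).card ≤ X.card ∧ ε * (cls c t.2.1).card ≤ Y.card ∧
      ε * (cls c t.2.2).card ≤ Z.card ∧
      ∑ w ∈ X ×ˢ Y ×ˢ Z, f w ≤ (cellAv f (tcol c) t - ε) * ((X.card : ℝ) * Y.card * Z.card) := by
    intro t ht
    unfold LReg at ht
    push Not at ht
    obtain ⟨X, Y, Z, h1, h2, h3, h4, h5, h6, h7⟩ := ht
    exact ⟨X, Y, Z, h1, h2, h3, h4, h5, h6, h7.le⟩
  choose! X Y Z hX hY hZ hXc hYc hZc hlow using hw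
  let c' : V → ι × (ι × ι × ι → Bool × Bool × Bool) := fun v =>
    (c v, fun t => (decide (v ∈ X t), decide (v ∈ Y t), decide (v ∈ Z t)))
  refine ⟨c', ?_⟩
  rw [energy_pyth f (tcol c) (tcol c') (fun k => (k.1.1, k.2.1.1, k.2.2.1))
    (fun w => rfl)]
  have key : ∀ t, ¬ LReg ε f c t → ε ^ 5 * cellN c t ≤
      ∑ w ∈ univ.filter (fun w => tcol c w = t),
        (cellAv f (tcol c') (tcol c' w) - cellAv f (tcol c) (tcol c w)) ^ 2 := by
    intro t ht
    have g := witness_gain f (tcol c) (tcol c') (X t ×ˢ Y t ×ˢ Z t)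
      (fun k => (k.1.2 t).1 = true ∧ (k.2.1.2 t).2.1 = true ∧ (k.2.2.2 t).2.2 = true)
      (by intro w; simp [tcol, c']) t
      (by
        intro w hw
        have : w ∈ cls c t.1 ×ˢ cls c t.2.1 ×ˢ cls c t.2.2 := by
          simp only [Finset.mem_product] at hw ⊢
          exact ⟨hX t ht hw.1, hY t ht hw.2.1, hZ t ht hw.2.2⟩
        rw [← tcol_fiber] at this
        exact (Finset.mem_filter.1 this).2) ε hε
      (by
        have := hlow t ht
        simpa [Finset.card_product, mul_assoc] using this)
    have g2 : ∑ w ∈ X t ×ˢ Y t ×ˢ Z t,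
        (cellAv f (tcol c') (tcol c' w) - cellAv f (tcol c) (tcol c w)) ^ 2 ≤
        ∑ w ∈ univ.filter (fun w => tcol c w = t),
        (cellAv f (tcol c') (tcol c' w) - cellAv f (tcol c) (tcol c w)) ^ 2 := by
      refine Finset.sum_le_sum_of_subset_of_nonneg ?_ (fun _ _ _ => sq_nonneg _)
      rw [tcol_fiber]
      exact Finset.product_subset_product (hX t ht)
        (Finset.product_subset_product (hY t ht) (hZ t ht))
    refine le_trans ?_ (g.trans g2)
    have hc : (ε * (cls c t.1).card) * ((ε * (cls c t.2.1).card) * (ε * (cls c t.2.2).card)) ≤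
        ((X t).card : ℝ) * ((Y t).card * (Z t).card) := by
      have a1 := hXc t ht
      have a2 := hYc t ht
      have a3 := hZc t ht
      gcongr
    simp only [Finset.card_product, Nat.cast_mul, cellN]
    calc _ = ε ^ 2 * ((ε * (cls c t.1).card) * ((ε * (cls c t.2.1).card) * (ε * (cls c t.2.2).card))) := by ring
      _ ≤ _ := by gcongr
  have tot : ∑ t ∈ univ.filter (fun t => ¬ LReg ε f c t), ε ^ 5 * cellN c t ≤
      ∑ w, (cellAv f (tcol c') (tcol c' w) - cellAv f (tcol c) (tcol c w)) ^ 2 := by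
    rw [← Finset.sum_fiberwise univ (tcol c)]
    refine le_trans (Finset.sum_le_sum fun t ht => key t (Finset.mem_filter.1 ht).2) ?_
    exact Finset.sum_le_sum_of_subset_of_nonneg (Finset.subset_univ _)
      (fun _ _ _ => Finset.sum_nonneg fun _ _ => sq_nonneg _)
  rw [← Finset.mul_sum] at tot
  have : ε ^ 5 * (ε * (Fintype.card V : ℝ) ^ 3) ≤
    ε ^ 5 * ∑ t ∈ univ.filter (fun t => ¬ LReg ε f c t), cellN c t := by gcongr
  nlinarith

def tower : ℕ → ℕ
  | 0 => 1
  | s + 1 => tower s * 8 ^ (tower s ^ 3)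

lemma tower_mono_step (s : ℕ) : tower s ≤ tower (s + 1) :=
  Nat.le_mul_of_pos_right _ (by positivity)

open Classical in
lemma weak_regularity (ε : ℝ) (hε : 0 < ε) : ∃ T : ℕ, ∀ (V : Type) [Fintype V] [DecidableEq V]
    (f : V × V × V → ℝ), 0 < Fintype.card V → (∀ w, 0 ≤ f w) → (∀ w, f w ≤ 1) →
    ∃ (ι : Type) (_ : Fintype ι) (_ : DecidableEq ι) (c : V → ι), Fintype.card ι ≤ T ∧
      ∑ t ∈ univ.filter (fun t => ¬ LReg ε f c t), cellN c t ≤ ε * (Fintype.card V : ℝ) ^ 3 := by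
  obtain ⟨s, hs⟩ := exists_nat_gt (1 / ε ^ 6)
  refine ⟨tower s, fun V _ _ f hV h0 h1 => ?_⟩
  by_contra hcon
  push Not at hcon
  have claim : ∀ r ≤ s, ∃ (ι : Type) (_ : Fintype ι) (_ : DecidableEq ι) (c : V → ι),
      Fintype.card ι ≤ tower r ∧ r * (ε ^ 6 * (Fintype.card V : ℝ) ^ 3) ≤
        ∑ w, (cellAv f (tcol c) (tcol c w)) ^ 2 := by
    intro r
    induction r with
    | zero =>
      intro _
      refine ⟨Unit, inferInstance, inferInstance, fun _ => (), by simp [tower], ?_⟩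
      simp only [Nat.cast_zero, zero_mul]
      exact Finset.sum_nonneg fun _ _ => sq_nonneg _
    | succ r ih =>
      intro hr
      obtain ⟨ι, i1, i2, c, hc, he⟩ := ih (by omega)
      have hle : tower r ≤ tower s := monotone_nat_of_le_succ tower_mono_step (by omega)
      obtain ⟨c', hc'⟩ := energy_step ε hε f c (hcon ι i1 i2 c (hc.trans hle))
      refine ⟨ι × (ι × ι × ι → Bool × Bool × Bool), inferInstance, inferInstance, c', ?_, ?_⟩
      · simp only [Fintype.card_prod, Fintype.card_fun, Fintype.card_bool, tower]
        norm_num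
        have : Fintype.card ι * (Fintype.card ι * Fintype.card ι) ≤ tower r ^ 3 := by
          calc _ = Fintype.card ι ^ 3 := by ring
            _ ≤ _ := by gcongr
        gcongr
        norm_num
      · refine le_trans ?_ (le_of_le_of_eq hc' ?_)
        · push_cast; linarith
        · refine Finset.sum_congr rfl fun w _ => ?_
          congr!
  obtain ⟨ι, i1, i2, c, hc, he⟩ := claim s le_rfl
  have h2 := energy_le f (tcol c) h0 h1
  have h3 : (Fintype.card (V × V × V) : ℝ) = (Fintype.card V : ℝ) ^ 3 := by
    simp only [Fintype.card_prod]; push_cast; ring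
  rw [h3] at h2
  have h4 : (0 : ℝ) < (Fintype.card V : ℝ) ^ 3 := by positivity
  rw [div_lt_iff₀ (by positivity)] at hs
  nlinarith

/-! ### The fractional tiling -/

lemma int_ind (z : ℝ) (hz : 0 ≤ z) :
    ∫ s in (0:ℝ)..2, (({x | x ≤ min z 2} : Set ℝ).indicator (fun _ => (1:ℝ)) s +
      (1 - ({x | x ≤ max 0 (min (4 - z) 2)} : Set ℝ).indicator (fun _ => (1:ℝ)) s)) ≤ z := by
  have m : ∀ a : ℝ, IntervalIntegrable
      (({x | x ≤ a} : Set ℝ).indicator (fun _ => (1:ℝ))) MeasureTheory.volume 0 2 := by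
    intro a
    rw [intervalIntegrable_iff_integrableOn_Ioc_of_le (by norm_num)]
    exact (MeasureTheory.integrable_const (1:ℝ)).indicator measurableSet_Iic
  rw [intervalIntegral.integral_add (m _) (by
      exact (intervalIntegrable_const).sub (m _)),
    intervalIntegral.integral_sub intervalIntegrable_const (m _),
    intervalIntegral.integral_indicator, intervalIntegral.integral_indicator]
  · simp
    rcases le_total z 2 with h | h
    · rw [min_eq_left h, min_eq_right (by linarith)]; simp
    · rw [min_eq_right h, min_eq_left (by linarith)]
      have := le_max_right 0 (4 - z); linarith
  · exact ⟨le_max_left _ _, max_le (by norm_num) (min_le_right _ _)⟩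
  · exact ⟨le_min hz (by norm_num), min_le_right _ _⟩

lemma exists_threshold {ι : Type} [Fintype ι] (μ z : ι → ℝ) (hμ : ∀ i, 0 ≤ μ i)
    (hz : ∀ i, 0 ≤ z i) (hlt : ∑ i, μ i * z i < 1) :
    ∃ s : ℝ, s ≤ 2 ∧ ∑ i, μ i * ((if s ≤ z i then 1 else 0) + (if 4 - s < z i then 1 else 0)) < 1 / 2 := by
  by_contra hcon
  push Not at hcon
  have m : ∀ a : ℝ, IntervalIntegrable
      (({x | x ≤ a} : Set ℝ).indicator (fun _ => (1:ℝ))) MeasureTheory.volume 0 2 := by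
    intro a
    rw [intervalIntegrable_iff_integrableOn_Ioc_of_le (by norm_num)]
    exact (MeasureTheory.integrable_const (1:ℝ)).indicator measurableSet_Iic
  let F : ι → ℝ → ℝ := fun i s => (({x | x ≤ min (z i) 2} : Set ℝ).indicator (fun _ => (1:ℝ)) s +
      (1 - ({x | x ≤ max 0 (min (4 - z i) 2)} : Set ℝ).indicator (fun _ => (1:ℝ)) s))
  have hF : ∀ i, IntervalIntegrable (fun s => μ i * F i s) MeasureTheory.volume 0 2 := fun i =>
    ((m _).add (intervalIntegrable_const.sub (m _))).const_mul _
  have h1 : ∫ s in (0:ℝ)..2, ∑ i, μ i * F i s ≤ ∑ i, μ i * z i := by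
    rw [intervalIntegral.integral_finsetSum (fun i _ => hF i)]
    refine Finset.sum_le_sum fun i _ => ?_
    rw [intervalIntegral.integral_const_mul]
    exact mul_le_mul_of_nonneg_left (int_ind (z i) (hz i)) (hμ i)
  have h2 : ∫ s in (0:ℝ)..2, (1/2 : ℝ) ≤ ∫ s in (0:ℝ)..2, ∑ i, μ i * F i s := by
    refine intervalIntegral.integral_mono_on_of_le_Ioo (by norm_num) intervalIntegrable_const
      ?_ ?_
    · have := IntervalIntegrable.sum (μ := MeasureTheory.volume) (a := 0) (b := 2) Finset.univ
        (f := fun i s => μ i * F i s) (fun i _ => hF i)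
      simpa only [Finset.sum_fn] using this
    · intro s hs
      refine (hcon s hs.2.le).trans (Finset.sum_le_sum fun i _ => ?_)
      refine mul_le_mul_of_nonneg_left ?_ (hμ i)
      simp only [F, Set.indicator_apply, Set.mem_ofPred_eq]
      have e1 : (s ≤ min (z i) 2) ↔ s ≤ z i := by simp [hs.2.le]
      have e2 : (s ≤ max 0 (min (4 - z i) 2)) ↔ ¬ (4 - s < z i) := by
        have : ¬ s ≤ 0 := not_le.2 hs.1
        simp only [le_max_iff, le_min_iff, hs.2.le, this, false_or, and_true, not_lt]
        constructor <;> intro h <;> linarith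
      simp only [e1, e2]
      by_cases h : 4 - s < z i <;> simp [h]
  have h3 : ∫ s in (0:ℝ)..2, (1/2 : ℝ) = 1 := by simp
  linarith

lemma pair_bound {ι : Type} [Fintype ι] (μ z : ι → ℝ) (hμ : ∀ i, 0 ≤ μ i)
    (hsum : ∑ i, μ i = 1)
    (hz : ∀ i, 0 ≤ z i) (hlt : ∑ i, μ i * z i < 1) (L : Finset (ι × ι))
    (hL : ∀ p ∈ L, 4 ≤ z p.1 + z p.2) : ∑ p ∈ L, μ p.1 * μ p.2 ≤ 7 / 16 := by
  obtain ⟨s, hs2, hs⟩ := exists_threshold μ z hμ hz hlt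
  set A : ι → ℝ := fun i => if 4 - s < z i then 1 else 0 with hA
  set B : ι → ℝ := fun i => if s ≤ z i then 1 else 0 with hB
  have hAB : ∀ i, (A i = 0 ∧ B i = 0) ∨ (A i = 0 ∧ B i = 1) ∨ (A i = 1 ∧ B i = 1) := by
    intro i
    simp only [hA, hB]
    by_cases h1 : 4 - s < z i
    · have : s ≤ z i := by linarith
      simp [h1, this]
    · by_cases h2 : s ≤ z i <;> simp [h1, h2]
  set a := ∑ i, μ i * A i with ha
  set b := ∑ i, μ i * B i with hb
  have hab : a + b < 1 / 2 := by
    rw [ha, hb, ← Finset.sum_add_distrib]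
    refine lt_of_eq_of_lt ?_ hs
    exact Finset.sum_congr rfl fun i _ => by simp only [hA, hB]; ring
  have hale : a ≤ b := by
    refine Finset.sum_le_sum fun i _ => mul_le_mul_of_nonneg_left ?_ (hμ i)
    rcases hAB i with h | h | h <;> simp [h.1, h.2]
  have ha0 : 0 ≤ a := Finset.sum_nonneg fun i _ => mul_nonneg (hμ i) (by
    rcases hAB i with h | h | h <;> simp [h.1])
  have e0 : ∀ p : ι × ι, 0 ≤ A p.1 + A p.2 - A p.1 * A p.2 + (B p.1 - A p.1) * (B p.2 - A p.2) := by
    intro p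
    rcases hAB p.1 with h | h | h <;> rcases hAB p.2 with h' | h' | h' <;>
      rw [h.1, h.2, h'.1, h'.2] <;> norm_num
  have e1 : ∀ p ∈ L, 1 ≤ A p.1 + A p.2 - A p.1 * A p.2 + (B p.1 - A p.1) * (B p.2 - A p.2) := by
    intro p hp
    have h4 := hL p hp
    by_cases q1 : 4 - s < z p.1
    · have : A p.1 = 1 := by simp [hA, q1]
      rcases hAB p.1 with h | h | h <;> rcases hAB p.2 with h' | h' | h' <;>
      rw [h.1, h.2, h'.1, h'.2] <;> norm_num <;> linarith [h.1]
    · by_cases q2 : 4 - s < z p.2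
      · have : A p.2 = 1 := by simp [hA, q2]
        rcases hAB p.1 with h | h | h <;> rcases hAB p.2 with h' | h' | h' <;>
        rw [h.1, h.2, h'.1, h'.2] <;> norm_num <;> linarith [h'.1]
      · have r1 : s ≤ z p.1 := by linarith
        have r2 : s ≤ z p.2 := by linarith
        simp [hA, hB, q1, q2, r1, r2]
  have e2 : ∑ p ∈ L, μ p.1 * μ p.2 ≤ ∑ p : ι × ι, μ p.1 * μ p.2 *
      (A p.1 + A p.2 - A p.1 * A p.2 + (B p.1 - A p.1) * (B p.2 - A p.2)) := by
    refine le_trans (Finset.sum_le_sum (g := fun p : ι × ι => μ p.1 * μ p.2 *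
      (A p.1 + A p.2 - A p.1 * A p.2 + (B p.1 - A p.1) * (B p.2 - A p.2))) fun p hp => ?_)
      (Finset.sum_le_sum_of_subset_of_nonneg (Finset.subset_univ _) fun p _ _ => ?_)
    · exact le_mul_of_one_le_right (mul_nonneg (hμ _) (hμ _)) (e1 p hp)
    · exact mul_nonneg (mul_nonneg (hμ _) (hμ _)) (e0 p)
  have e3 : ∑ p : ι × ι, μ p.1 * μ p.2 *
      (A p.1 + A p.2 - A p.1 * A p.2 + (B p.1 - A p.1) * (B p.2 - A p.2)) =
      2 * a - a * a + (b - a) * (b - a) := by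
    have t : ∀ F G : ι → ℝ, ∑ p : ι × ι, F p.1 * G p.2 = (∑ i, F i) * (∑ i, G i) := by
      intro F G
      rw [Fintype.sum_prod_type, Finset.sum_mul_sum]
    have t1 := t (fun i => μ i * A i) μ
    have t2 := t μ (fun i => μ i * A i)
    have t3 := t (fun i => μ i * A i) (fun i => μ i * A i)
    have t4 := t (fun i => μ i * B i - μ i * A i) (fun i => μ i * B i - μ i * A i)
    simp only [Finset.sum_sub_distrib, hsum, ← ha, ← hb] at t1 t2 t3 t4
    have : 2 * a - a * a + (b - a) * (b - a) = a * 1 + 1 * a - a * a + (b - a) * (b - a) := by ring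
    rw [this, ← t1, ← t2, ← t3, ← t4, ← Finset.sum_add_distrib, ← Finset.sum_sub_distrib,
      ← Finset.sum_add_distrib]
    exact Finset.sum_congr rfl fun p _ => by ring
  rw [e3] at e2
  refine e2.trans ?_
  by_cases hb4 : b ≤ 1 / 4
  · nlinarith
  · push Not at hb4
    nlinarith

def use {ι : Type} [DecidableEq ι] (t : ι × ι × ι) (l : ι) : ℝ :=
  (if t.1 = l then 1 else 0) + (if t.2.1 = l then 1 else 0) + 2 * (if t.2.2 = l then 1 else 0)

lemma use_nonneg {ι : Type} [DecidableEq ι] (t : ι × ι × ι) (l : ι) : 0 ≤ use t l := by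
  unfold use; positivity

lemma sum_use_mul {ι : Type} [Fintype ι] [DecidableEq ι] (t : ι × ι × ι) (y : ι → ℝ) :
    ∑ l, use t l * y l = y t.1 + y t.2.1 + 2 * y t.2.2 := by
  simp [use, add_mul, Finset.sum_add_distrib]

lemma sum_use {ι : Type} [Fintype ι] [DecidableEq ι] (t : ι × ι × ι) :
    ∑ l, use t l = 4 := by
  have := sum_use_mul t (fun _ => 1)
  simp only [mul_one] at this
  rw [this]; norm_num

lemma frac_tiling_prob {ι : Type} [Fintype ι] [DecidableEq ι] (μ : ι → ℝ) (hμ : ∀ i, 0 ≤ μ i)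
    (hsum : ∑ i, μ i = 1) (R : Finset (ι × ι × ι)) (B : Finset ι)
    (hR : ∀ k ∉ B, 7 / 16 < ∑ p ∈ univ.filter (fun p : ι × ι => (p.1, p.2, k) ∈ R), μ p.1 * μ p.2) :
    ∃ h : ι × ι × ι → ℝ, (∀ t, 0 ≤ h t) ∧ (∀ t, t ∉ R → h t = 0) ∧
      (∀ l, ∑ t, h t * use t l ≤ μ l) ∧ 1 - ∑ k ∈ B, μ k ≤ 4 * ∑ t, h t := by
  classical
  let gen : ({t // t ∈ R} ⊕ {k // k ∈ B}) → (ι → ℝ) := fun j =>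
    Sum.elim (fun t l => use t.1 l / 4) (fun k l => if k.1 = l then 1 else 0) j
  let Λ := Fintype.linearCombination ℝ gen
  have hgen : ∀ j, ∑ l, gen j l = 1 := by
    rintro (t | k)
    · simp only [gen, Sum.elim_inl]
      rw [← Finset.sum_div, sum_use]; norm_num
    · simp [gen]
  have hmem : μ ∈ Λ '' stdSimplex ℝ ({t // t ∈ R} ⊕ {k // k ∈ B}) := by
    by_contra hcon
    have hcv : Convex ℝ (Λ '' stdSimplex ℝ ({t // t ∈ R} ⊕ {k // k ∈ B})) :=
      (convex_stdSimplex ℝ _).linear_image Λ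
    have hcl : IsClosed (Λ '' stdSimplex ℝ ({t // t ∈ R} ⊕ {k // k ∈ B})) :=
      ((isCompact_stdSimplex ℝ _).image (LinearMap.continuous_on_pi Λ)).isClosed
    obtain ⟨φ, u, h1, h2⟩ := geometric_hahn_banach_point_closed hcv hcl hcon
    let y : ι → ℝ := fun l => φ (Pi.single l 1) - u
    have hφ : ∀ x : ι → ℝ, ∑ l, x l = 1 → φ x - u = ∑ l, x l * y l := by
      intro x hx
      have : φ x = ∑ l, x l * φ (Pi.single l 1) := by
        conv_lhs => rw [pi_eq_sum_univ' x]
        rw [map_sum]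
        refine Finset.sum_congr rfl fun l _ => ?_
        rw [map_smul, smul_eq_mul]
      simp only [y, mul_sub, Finset.sum_sub_distrib, ← Finset.sum_mul, hx, this, one_mul]
    have hy1 : ∑ l, μ l * y l < 0 := by rw [← hφ μ hsum]; linarith
    have hy2 : ∀ j, 0 < ∑ l, gen j l * y l := by
      intro j
      rw [← hφ _ (hgen j)]
      have := h2 (gen j) ⟨Pi.single j 1, single_mem_stdSimplex ℝ j, by simp [Λ]⟩
      linarith
    have hne : Nonempty ι := by
      by_contra h
      rw [not_nonempty_iff] at h
      simp at hsum
    obtain ⟨k, hk⟩ := Finite.exists_min y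
    have hk0 : y k < 0 := by
      by_contra h
      push Not at h
      have : 0 ≤ ∑ l, μ l * y l := Finset.sum_nonneg fun l _ => mul_nonneg (hμ l) (h.trans (hk l))
      linarith
    have hkB : k ∉ B := by
      intro h
      have := hy2 (Sum.inr ⟨k, h⟩)
      simp [gen] at this
      linarith
    have hb := pair_bound μ (fun l => (y l - y k) / (- y k)) hμ hsum
      (fun l => div_nonneg (by linarith [hk l]) (by linarith)) (by
        have : ∑ i, μ i * ((y i - y k) / (- y k)) = ((∑ i, μ i * y i) - y k) / (- y k) := by
          simp only [← mul_div_assoc, ← Finset.sum_div, mul_sub, Finset.sum_sub_distrib,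
            ← Finset.sum_mul, hsum, one_mul]
        rw [this, div_lt_one (by linarith)]
        linarith)
      (univ.filter (fun p : ι × ι => (p.1, p.2, k) ∈ R)) (by
        intro p hp
        have hp := (Finset.mem_filter.1 hp).2
        have := hy2 (Sum.inl ⟨_, hp⟩)
        simp only [gen, Sum.elim_inl, div_mul_eq_mul_div] at this
        rw [← Finset.sum_div, sum_use_mul] at this
        simp only at this
        rw [← add_div, le_div_iff₀ (by linarith)]
        linarith)
    linarith [hR k hkB]
  obtain ⟨w, ⟨hw0, hw1⟩, hw⟩ := hmem
  have hwl : ∀ l, ∑ t : {t // t ∈ R}, w (Sum.inl t) * (use t.1 l / 4) +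
      ∑ k : {k // k ∈ B}, w (Sum.inr k) * (if k.1 = l then 1 else 0) = μ l := by
    intro l
    rw [← hw]
    simp [Λ, Fintype.linearCombination_apply, gen]
  let h : ι × ι × ι → ℝ := fun t => if ht : t ∈ R then w (Sum.inl ⟨t, ht⟩) / 4 else 0
  have hh : ∀ g : ι × ι × ι → ℝ, ∑ t, h t * g t = ∑ t : {t // t ∈ R}, w (Sum.inl t) * (g t.1 / 4) := by
    intro g
    rw [← Finset.sum_subset (Finset.subset_univ R) (by intro t _ ht; simp [h, ht]),
      ← Finset.sum_coe_sort R]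
    refine Finset.sum_congr rfl fun t _ => ?_
    simp [h]; ring
  refine ⟨h, ?_, ?_, ?_, ?_⟩
  · intro t
    simp only [h]
    split_ifs
    · exact div_nonneg (hw0 _) (by norm_num)
    · exact le_rfl
  · intro t ht; simp [h, ht]
  · intro l
    rw [hh (fun t => use t l), ← hwl l]
    have : 0 ≤ ∑ k : {k // k ∈ B}, w (Sum.inr k) * (if k.1 = l then (1:ℝ) else 0) :=
      Finset.sum_nonneg fun k _ => mul_nonneg (hw0 _) (by positivity)
    linarith
  · have e1 := hh (fun _ => 1)
    simp only [mul_one] at e1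
    rw [e1, ← Finset.sum_mul]
    rw [Fintype.sum_sum_type] at hw1
    have e2 : ∀ k : {k // k ∈ B}, w (Sum.inr k) ≤ μ k.1 := by
      intro k
      rw [← hwl k.1]
      have a1 : 0 ≤ ∑ t : {t // t ∈ R}, w (Sum.inl t) * (use t.1 k.1 / 4) :=
        Finset.sum_nonneg fun t _ => mul_nonneg (hw0 _) (div_nonneg (use_nonneg _ _) (by norm_num))
      have a2 := Finset.single_le_sum (s := univ)
        (f := fun k' : {k // k ∈ B} => w (Sum.inr k') * (if k'.1 = k.1 then (1:ℝ) else 0))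
        (fun k' _ => mul_nonneg (hw0 _) (by positivity)) (Finset.mem_univ k)
      simp only [if_true, mul_one] at a2
      linarith
    have e3 : ∑ k : {k // k ∈ B}, w (Sum.inr k) ≤ ∑ k ∈ B, μ k := by
      rw [← Finset.sum_coe_sort B]
      exact Finset.sum_le_sum fun k _ => e2 k
    linarith

lemma frac_tiling {ι : Type} [Fintype ι] [DecidableEq ι] (m : ι → ℝ) (n : ℝ) (hn : 0 < n)
    (hm : ∀ i, 0 ≤ m i)
    (hsum : ∑ i, m i = n) (R : Finset (ι × ι × ι)) (B : Finset ι)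
    (hR : ∀ k ∉ B, 7 / 16 * n ^ 2 <
      ∑ p ∈ univ.filter (fun p : ι × ι => (p.1, p.2, k) ∈ R), m p.1 * m p.2) :
    ∃ h : ι × ι × ι → ℝ, (∀ t, 0 ≤ h t) ∧ (∀ t, t ∉ R → h t = 0) ∧
      (∀ l, ∑ t, h t * use t l ≤ m l) ∧ n - ∑ k ∈ B, m k ≤ 4 * ∑ t, h t := by
  obtain ⟨h, h0, h1, h2, h3⟩ := frac_tiling_prob (fun i => m i / n)
    (fun i => div_nonneg (hm i) hn.le) (by rw [← Finset.sum_div, hsum, div_self hn.ne']) R B (by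
      intro k hk
      have : ∑ p ∈ univ.filter (fun p : ι × ι => (p.1, p.2, k) ∈ R), m p.1 / n * (m p.2 / n) =
          (∑ p ∈ univ.filter (fun p : ι × ι => (p.1, p.2, k) ∈ R), m p.1 * m p.2) / n ^ 2 := by
        rw [Finset.sum_div]
        exact Finset.sum_congr rfl fun p _ => by field_simp
      rw [this, lt_div_iff₀ (by positivity)]
      exact hR k hk)
  refine ⟨fun t => n * h t, fun t => mul_nonneg hn.le (h0 t), fun t ht => by simp [h1 t ht], ?_, ?_⟩
  · intro l
    have := h2 l
    simp only [mul_assoc, ← Finset.mul_sum]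
    rw [le_div_iff₀ hn] at this
    linarith
  · rw [← Finset.mul_sum]
    rw [← Finset.sum_div] at h3
    have := mul_le_mul_of_nonneg_left h3 hn.le
    rw [mul_sub, mul_div_cancel₀ _ hn.ne'] at this
    linarith

/-! ### Long paths in dense boxes -/

noncomputable def hind {V : Type} [DecidableEq V] (H : Finset (Finset V)) (w : V × V × V) : ℝ :=
  if ({w.1, w.2.1, w.2.2} : Finset V) ∈ H then 1 else 0

lemma hind_nonneg {V : Type} [DecidableEq V] (H : Finset (Finset V)) (w : V × V × V) :
    0 ≤ hind H w := by unfold hind; positivity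

lemma hind_le_one {V : Type} [DecidableEq V] (H : Finset (Finset V)) (w : V × V × V) :
    hind H w ≤ 1 := by unfold hind; split_ifs <;> norm_num

/-- pruning: pass to subsets in which all degrees are large -/
lemma prune {V : Type} [Fintype V] [DecidableEq V] (g : V → V → ℝ)
    (X Y : Finset V) (D : ℝ) (hD : 0 ≤ D)
    (h : 2 * D * Fintype.card V < ∑ x ∈ X, ∑ y ∈ Y, g x y) :
    ∃ X' Y' : Finset V, X' ⊆ X ∧ Y' ⊆ Y ∧ X'.Nonempty ∧
      (∀ x ∈ X', D ≤ ∑ y ∈ Y', g x y) ∧ (∀ y ∈ Y', D ≤ ∑ x ∈ X', g x y) := by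
  obtain ⟨P, hP, hmax⟩ := Finset.exists_max_image (X.powerset ×ˢ Y.powerset)
    (fun P => ∑ x ∈ P.1, ∑ y ∈ P.2, g x y - D * (P.1.card + P.2.card))
    ⟨(X, Y), by simp⟩
  rw [Finset.mem_product, Finset.mem_powerset, Finset.mem_powerset] at hP
  have h0 := hmax (X, Y) (by simp)
  simp only at h0
  have hXc : (X.card : ℝ) ≤ Fintype.card V := by exact_mod_cast Finset.card_le_univ X
  have hYc : (Y.card : ℝ) ≤ Fintype.card V := by exact_mod_cast Finset.card_le_univ Y
  refine ⟨P.1, P.2, hP.1, hP.2, ?_, ?_, ?_⟩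
  · rw [Finset.nonempty_iff_ne_empty]
    intro he
    rw [he] at h0
    simp only [Finset.sum_empty, Finset.card_empty] at h0
    have : 0 ≤ D * (P.2.card : ℝ) := by positivity
    push_cast at h0
    nlinarith
  · intro x hx
    have := hmax (P.1.erase x, P.2) (by
      rw [Finset.mem_product, Finset.mem_powerset, Finset.mem_powerset]
      exact ⟨(Finset.erase_subset _ _).trans hP.1, hP.2⟩)
    simp only at this
    rw [← Finset.add_sum_erase _ _ hx, ← Finset.card_erase_add_one hx] at this
    push_cast at this
    linarith
  · intro y hy
    have := hmax (P.1, P.2.erase y) (by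
      rw [Finset.mem_product, Finset.mem_powerset, Finset.mem_powerset]
      exact ⟨hP.1, (Finset.erase_subset _ _).trans hP.2⟩)
    simp only at this
    rw [Finset.sum_comm, Finset.sum_comm (s := P.1), ← Finset.add_sum_erase _ _ hy,
      ← Finset.card_erase_add_one hy] at this
    push_cast at this
    linarith

lemma extend_path {V : Type} [Fintype V] [DecidableEq V] (H : Finset (Finset V))
    (P : ℕ → Finset V) (Z : Finset V) (D : ℝ) (M : ℕ)
    (hdeg : ∀ s, ∀ a ∈ P s, D ≤ ∑ y ∈ P (s + 1), ∑ z ∈ Z, hind H (a, y, z))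
    (h3 : ∀ e ∈ H, e.card = 3)
    (hne : (P 0).Nonempty) (hM : 2 * (2 * (M : ℝ) + 1) * Fintype.card V < D) :
    ∀ s ≤ M, ∃ f : ℕ → V, (∀ i ≤ 2 * s, ∀ j ≤ 2 * s, f i = f j → i = j) ∧
      (∀ i < s, ({f (2 * i), f (2 * i + 1), f (2 * i + 2)} : Finset V) ∈ H) ∧
      (∀ i ≤ s, f (2 * i) ∈ P i) ∧ (∀ i < s, f (2 * i + 1) ∈ Z) := by
  intro s
  induction s with
  | zero =>
    intro _
    obtain ⟨x, hx⟩ := hne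
    refine ⟨fun _ => x, by intro i hi j hj _; omega, by intro i hi; omega, ?_, by intro i hi; omega⟩
    intro i hi
    obtain rfl : i = 0 := by omega
    exact hx
  | succ s ih =>
    intro hs
    obtain ⟨f, hinj, hedge, hP, hZ⟩ := ih (by omega)
    set W : Finset V := (Finset.range (2 * s + 1)).image f with hW
    have hWc : (W.card : ℝ) ≤ 2 * M + 1 := by
      have : W.card ≤ 2 * s + 1 := Finset.card_image_le.trans (by simp)
      have h2 : W.card ≤ 2 * M + 1 := by omega
      exact_mod_cast h2
    set a := f (2 * s) with ha
    have haP : a ∈ P s := hP s le_rfl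
    have hex : ∃ y ∈ P (s + 1), ∃ z ∈ Z, y ∉ W ∧ z ∉ W ∧ ({a, y, z} : Finset V) ∈ H := by
      by_contra hcon
      push Not at hcon
      have h1 := hdeg s a haP
      have h2 : ∑ y ∈ P (s + 1), ∑ z ∈ Z, hind H (a, y, z) ≤
          ∑ y : V, ∑ z : V, ((if y ∈ W then (1:ℝ) else 0) + (if z ∈ W then 1 else 0)) := by
        refine le_trans (Finset.sum_le_sum
          (g := fun y => ∑ z : V, ((if y ∈ W then (1:ℝ) else 0) + (if z ∈ W then 1 else 0)))
          fun y hy => ?_) (Finset.sum_le_sum_of_subset_of_nonneg (Finset.subset_univ _)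
          fun y _ _ => Finset.sum_nonneg fun z _ => by positivity)
        refine le_trans (Finset.sum_le_sum
          (g := fun z => ((if y ∈ W then (1:ℝ) else 0) + (if z ∈ W then 1 else 0)))
          fun z hz => ?_) (Finset.sum_le_sum_of_subset_of_nonneg (Finset.subset_univ _)
          fun y _ _ => by positivity)
        by_cases q1 : y ∈ W
        · have := hind_le_one H (a, y, z)
          have h0 : (0:ℝ) ≤ if z ∈ W then 1 else 0 := by positivity
          simp only [q1, if_true]; linarith
        · by_cases q2 : z ∈ W
          · have := hind_le_one H (a, y, z)
            simp only [q1, q2, if_true, if_false]; linarith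
          · have := hcon y hy z hz q1 q2
            simp [hind, this, q1, q2]
      have h4 : ∑ y : V, ∑ z : V, ((if y ∈ W then (1:ℝ) else 0) + (if z ∈ W then 1 else 0)) =
          2 * W.card * Fintype.card V := by
        simp only [Finset.sum_add_distrib, Finset.sum_const, Finset.sum_ite_mem, nsmul_eq_mul,
          Finset.card_univ, Finset.univ_inter]
        simp only [mul_ite, mul_one, mul_zero, Finset.sum_ite_mem, Finset.univ_inter,
          Finset.sum_const, nsmul_eq_mul]
        ring
      have h5 : 2 * (W.card : ℝ) * Fintype.card V ≤ 2 * (2 * (M : ℝ) + 1) * Fintype.card V := by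
        gcongr
      linarith
    obtain ⟨y, hy, z, hz, hyW, hzW, hE⟩ := hex
    have hyz : y ≠ z := by
      rintro rfl
      have := h3 _ hE
      have h2 := Finset.card_le_two (a := a) (b := y)
      simp at this
      omega
    have hfW : ∀ i ≤ 2 * s, f i ∈ W := fun i hi =>
      Finset.mem_image_of_mem f (by simp; omega)
    let f' : ℕ → V := fun i => if i ≤ 2 * s then f i else if i = 2 * s + 1 then z else y
    have hlow : ∀ i ≤ 2 * s, f' i = f i := fun i hi => by simp [f', hi]
    have hz' : f' (2 * s + 1) = z := by simp [f']
    have hy' : f' (2 * s + 2) = y := by simp [f']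
    refine ⟨f', ?_, ?_, ?_, ?_⟩
    · have caseI : ∀ i ≤ 2 * (s + 1), i ≤ 2 * s ∨ i = 2 * s + 1 ∨ i = 2 * s + 2 := by
        intro i hi; omega
      intro i hi j hj hij
      rcases caseI i hi with hi | rfl | rfl <;> rcases caseI j hj with hj | rfl | rfl
      · rw [hlow i hi, hlow j hj] at hij; exact hinj i hi j hj hij
      · rw [hlow i hi, hz'] at hij; exact absurd (hij ▸ hfW i hi) hzW
      · rw [hlow i hi, hy'] at hij; exact absurd (hij ▸ hfW i hi) hyW
      · rw [hlow j hj, hz'] at hij; exact absurd (hij ▸ hfW j hj) hzW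
      · rfl
      · rw [hz', hy'] at hij; exact absurd hij.symm hyz
      · rw [hlow j hj, hy'] at hij; exact absurd (hij ▸ hfW j hj) hyW
      · rw [hz', hy'] at hij; exact absurd hij hyz
      · rfl
    · intro i hi
      rcases Nat.lt_or_ge i s with h | h
      · rw [hlow _ (by omega), hlow _ (by omega), hlow _ (by omega)]
        exact hedge i h
      · obtain rfl : i = s := by omega
        rw [hlow _ (by omega), hz', hy', Finset.pair_comm z y]
        exact hE
    · intro i hi
      rcases Nat.lt_or_ge s i with h | h
      · obtain rfl : i = s + 1 := by omega
        rw [show 2 * (s + 1) = 2 * s + 2 by ring, hy']; exact hy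
      · rw [hlow _ (by omega)]; exact hP i h
    · intro i hi
      rcases Nat.lt_or_ge i s with h | h
      · rw [hlow _ (by omega)]; exact hZ i h
      · obtain rfl : i = s := by omega
        rw [hz']; exact hz

lemma hind_swap {V : Type} [DecidableEq V] (H : Finset (Finset V)) (x y z : V) :
    hind H (x, y, z) = hind H (y, x, z) := by
  unfold hind
  simp only [Finset.insert_comm]

/-- a dense box contains a long loose path with alternating joints -/
lemma dense_path {V : Type} [Fintype V] [DecidableEq V] (H : Finset (Finset V))
    (h3 : ∀ e ∈ H, e.card = 3) (X Y Z : Finset V) (δ : ℝ) (L : ℕ) (hL : 1 ≤ L)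
    (hn : 0 < Fintype.card V)
    (hδ : δ * (Fintype.card V : ℝ) ^ 3 ≤ ∑ w ∈ X ×ˢ Y ×ˢ Z, hind H w)
    (hLδ : 40 * (L : ℝ) < δ * Fintype.card V) :
    ∃ f : ℕ → V, IsLoosePath H (2 * L) f ∧ (∀ i ≤ L, f (4 * i) ∈ X) ∧
      (∀ i < L, f (4 * i + 2) ∈ Y) ∧ (∀ i < 2 * L, f (2 * i + 1) ∈ Z) := by
  have hn' : (0 : ℝ) < Fintype.card V := by exact_mod_cast hn
  have hL' : (1 : ℝ) ≤ L := by exact_mod_cast hL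
  set n : ℝ := (Fintype.card V : ℝ) with hnn
  have hδ0 : 0 < δ := by
    by_contra h
    push Not at h
    nlinarith
  rw [Finset.sum_product] at hδ
  simp only [Finset.sum_product] at hδ
  obtain ⟨X', Y', hX', hY', hne, hdx, hdy⟩ := prune (fun x y => ∑ z ∈ Z, hind H (x, y, z)) X Y
    (δ * n ^ 2 / 4) (by positivity) (by
      refine lt_of_lt_of_le ?_ hδ
      rw [← hnn]
      have : 0 < δ * n ^ 3 := by positivity
      nlinarith)
  obtain ⟨f, h1, h2, h4, h5⟩ := extend_path H (fun s => if s % 2 = 0 then X' else Y') Z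
    (δ * n ^ 2 / 4) (2 * L) (by
      intro s a ha
      rcases Nat.mod_two_eq_zero_or_one s with h | h
      · have h' : (s + 1) % 2 = 1 := by omega
        simp only [h, if_true] at ha
        simp only [h', one_ne_zero, if_false]
        exact hdx a ha
      · have h' : (s + 1) % 2 = 0 := by omega
        simp only [h, one_ne_zero, if_false] at ha
        simp only [h', if_true]
        refine (hdy a ha).trans (le_of_eq ?_)
        exact Finset.sum_congr rfl fun x _ => Finset.sum_congr rfl fun z _ => hind_swap H x a z)
    h3 (by simpa using hne) (by
      rw [← hnn]; push_cast
      nlinarith [mul_pos hn' hn']) (2 * L) le_rfl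
  refine ⟨f, ⟨by omega, h1, h2⟩, ?_, ?_, h5⟩
  · intro i hi
    have := h4 (2 * i) (by omega)
    rw [if_pos (by omega), show 2 * (2 * i) = 4 * i by ring] at this
    exact hX' this
  · intro i hi
    have := h4 (2 * i + 1) (by omega)
    rw [if_neg (by omega), show 2 * (2 * i + 1) = 4 * i + 2 by ring] at this
    exact hY' this

/-! ### Extracting the paths one after another -/

lemma path_use {V ι : Type} [Fintype V] [DecidableEq V] [DecidableEq ι] (c : V → ι)
    (t : ι × ι × ι) (L : ℕ) (f : ℕ → V) (hX : ∀ i ≤ L, f (4 * i) ∈ cls c t.1)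
    (hY : ∀ i < L, f (4 * i + 2) ∈ cls c t.2.1) (hZ : ∀ i < 2 * L, f (2 * i + 1) ∈ cls c t.2.2)
    (l : ι) : ((pathVerts (2 * L) f ∩ cls c l).card : ℝ) ≤ (L + 1) * use t l := by
  have hX : ∀ i ≤ L, c (f (4 * i)) = t.1 := fun i hi => by simpa [cls] using hX i hi
  have hY : ∀ i < L, c (f (4 * i + 2)) = t.2.1 := fun i hi => by simpa [cls] using hY i hi
  have hZ : ∀ i < 2 * L, c (f (2 * i + 1)) = t.2.2 := fun i hi => by simpa [cls] using hZ i hi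
  have hsub : pathVerts (2 * L) f ∩ cls c l ⊆
      ((if t.1 = l then (Finset.range (L + 1)).image (fun i => f (4 * i)) else ∅) ∪
      (if t.2.1 = l then (Finset.range L).image (fun i => f (4 * i + 2)) else ∅)) ∪
      (if t.2.2 = l then (Finset.range (2 * L)).image (fun i => f (2 * i + 1)) else ∅) := by
    intro v hv
    simp only [pathVerts, cls, Finset.mem_inter, Finset.mem_image, Finset.mem_range,
      Finset.mem_filter, Finset.mem_univ, true_and] at hv
    obtain ⟨⟨p, hp, rfl⟩, hl⟩ := hv
    have hcase : (∃ i ≤ L, p = 4 * i) ∨ (∃ i < L, p = 4 * i + 2) ∨ (∃ i < 2 * L, p = 2 * i + 1) := by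
      have : p % 4 = 0 ∨ p % 4 = 2 ∨ p % 2 = 1 := by omega
      rcases this with h | h | h
      · exact Or.inl ⟨p / 4, by omega, by omega⟩
      · exact Or.inr (Or.inl ⟨p / 4, by omega, by omega⟩)
      · exact Or.inr (Or.inr ⟨p / 2, by omega, by omega⟩)
    rcases hcase with ⟨i, hi, rfl⟩ | ⟨i, hi, rfl⟩ | ⟨i, hi, rfl⟩
    · rw [hX i hi] at hl
      refine Finset.mem_union_left _ (Finset.mem_union_left _ ?_)
      rw [if_pos hl]
      exact Finset.mem_image.2 ⟨i, by simp; omega, rfl⟩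
    · rw [hY i hi] at hl
      refine Finset.mem_union_left _ (Finset.mem_union_right _ ?_)
      rw [if_pos hl]
      exact Finset.mem_image.2 ⟨i, by simp; omega, rfl⟩
    · rw [hZ i hi] at hl
      refine Finset.mem_union_right _ ?_
      rw [if_pos hl]
      exact Finset.mem_image.2 ⟨i, by simp; omega, rfl⟩
  have hcard := Finset.card_le_card hsub
  have b1 : (if t.1 = l then (Finset.range (L + 1)).image (fun i => f (4 * i)) else ∅).card ≤
      (L + 1) * (if t.1 = l then 1 else 0) := by
    split_ifs
    · exact Finset.card_image_le.trans (by simp)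
    · simp
  have b2 : (if t.2.1 = l then (Finset.range L).image (fun i => f (4 * i + 2)) else ∅).card ≤
      (L + 1) * (if t.2.1 = l then 1 else 0) := by
    split_ifs
    · exact Finset.card_image_le.trans (by simp)
    · simp
  have b3 : (if t.2.2 = l then (Finset.range (2 * L)).image (fun i => f (2 * i + 1)) else ∅).card ≤
      (L + 1) * (2 * (if t.2.2 = l then 1 else 0)) := by
    split_ifs
    · exact Finset.card_image_le.trans (by simp; omega)
    · simp
  have b4 := Finset.card_union_le
      ((if t.1 = l then (Finset.range (L + 1)).image (fun i => f (4 * i)) else ∅) ∪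
      (if t.2.1 = l then (Finset.range L).image (fun i => f (4 * i + 2)) else ∅))
      (if t.2.2 = l then (Finset.range (2 * L)).image (fun i => f (2 * i + 1)) else ∅)
  have b5 := Finset.card_union_le
      (if t.1 = l then (Finset.range (L + 1)).image (fun i => f (4 * i)) else ∅)
      (if t.2.1 = l then (Finset.range L).image (fun i => f (4 * i + 2)) else ∅)
  have fin : (pathVerts (2 * L) f ∩ cls c l).card ≤ (L + 1) * ((if t.1 = l then 1 else 0) +
      (if t.2.1 = l then 1 else 0) + 2 * (if t.2.2 = l then 1 else 0)) := by
    rw [mul_add, mul_add]; omega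
  unfold use
  exact_mod_cast fin

lemma seq_paths {V ι J : Type} [Fintype V] [DecidableEq V] [DecidableEq ι] [Fintype J]
    [DecidableEq J] (H : Finset (Finset V)) (h3 : ∀ e ∈ H, e.card = 3) (c : V → ι)
    (tr : J → ι × ι × ι) (η δ : ℝ) (L : ℕ) (hL : 1 ≤ L) (hn : 0 < Fintype.card V)
    (hLδ : 40 * (L : ℝ) < δ * Fintype.card V)
    (hcap : ∀ l, ∑ j, (L + 1) * use (tr j) l ≤ (1 - η) * (cls c l).card)
    (hdense : ∀ j, ∀ X Y Z : Finset V, X ⊆ cls c (tr j).1 → Y ⊆ cls c (tr j).2.1 →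
      Z ⊆ cls c (tr j).2.2 → η * (cls c (tr j).1).card ≤ X.card →
      η * (cls c (tr j).2.1).card ≤ Y.card → η * (cls c (tr j).2.2).card ≤ Z.card →
      δ * (Fintype.card V : ℝ) ^ 3 ≤ ∑ w ∈ X ×ˢ Y ×ˢ Z, hind H w) :
    ∀ s : Finset J, ∃ fs : J → ℕ → V, (∀ j ∈ s, IsLoosePath H (2 * L) (fs j)) ∧
      (∀ i ∈ s, ∀ j ∈ s, i ≠ j →
        Disjoint (pathVerts (2 * L) (fs i)) (pathVerts (2 * L) (fs j))) ∧
      ∀ l, (((s.biUnion fun j => pathVerts (2 * L) (fs j)) ∩ cls c l).card : ℝ) ≤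
        ∑ j ∈ s, (L + 1) * use (tr j) l := by
  intro s
  induction s using Finset.induction_on with
  | empty =>
    have : Nonempty V := Fintype.card_pos_iff.1 hn
    exact ⟨fun _ _ => Classical.arbitrary V, by simp, by simp, by simp⟩
  | insert a s ha ih =>
    obtain ⟨fs, hp, hd, hu⟩ := ih
    set W := s.biUnion fun j => pathVerts (2 * L) (fs j) with hW
    have hrem : ∀ l, η * (cls c l).card ≤ ((cls c l \ W).card : ℝ) := by
      intro l
      have e1 : ((cls c l \ W).card : ℝ) + ((W ∩ cls c l).card : ℝ) = (cls c l).card := by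
        rw [Finset.inter_comm]
        exact_mod_cast Finset.card_sdiff_add_card_inter (cls c l) W
      have e2 : ∑ j ∈ s, ((L:ℝ) + 1) * use (tr j) l ≤ ∑ j, ((L:ℝ) + 1) * use (tr j) l :=
        Finset.sum_le_sum_of_subset_of_nonneg (Finset.subset_univ _) fun j _ _ =>
          mul_nonneg (by positivity) (use_nonneg _ _)
      linarith [hu l, hcap l]
    obtain ⟨f, hf, fX, fY, fZ⟩ := dense_path H h3 (cls c (tr a).1 \ W) (cls c (tr a).2.1 \ W)
      (cls c (tr a).2.2 \ W) δ L hL hn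
      (hdense a _ _ _ Finset.sdiff_subset Finset.sdiff_subset Finset.sdiff_subset
        (hrem _) (hrem _) (hrem _)) hLδ
    have hfW : Disjoint (pathVerts (2 * L) f) W := by
      rw [Finset.disjoint_left]
      intro v hv
      simp only [pathVerts, Finset.mem_image, Finset.mem_range] at hv
      obtain ⟨p, hp, rfl⟩ := hv
      have : p % 4 = 0 ∨ p % 4 = 2 ∨ p % 2 = 1 := by omega
      rcases this with h | h | h
      · have := fX (p / 4) (by omega)
        rw [show 4 * (p / 4) = p by omega] at this
        exact (Finset.mem_sdiff.1 this).2
      · have := fY (p / 4) (by omega)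
        rw [show 4 * (p / 4) + 2 = p by omega] at this
        exact (Finset.mem_sdiff.1 this).2
      · have := fZ (p / 2) (by omega)
        rw [show 2 * (p / 2) + 1 = p by omega] at this
        exact (Finset.mem_sdiff.1 this).2
    have hne : ∀ j ∈ s, j ≠ a := fun j hj h => ha (h ▸ hj)
    have hold : ∀ j ∈ s, Function.update fs a f j = fs j := fun j hj =>
      Function.update_of_ne (hne j hj) _ _
    have hnew : Function.update fs a f a = f := Function.update_self _ _ _
    have hdisj : ∀ j ∈ s, Disjoint (pathVerts (2 * L) f) (pathVerts (2 * L) (fs j)) :=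
      fun j hj => Finset.disjoint_of_subset_right
        (Finset.subset_biUnion_of_mem (fun j => pathVerts (2 * L) (fs j)) hj) hfW
    refine ⟨Function.update fs a f, ?_, ?_, ?_⟩
    · intro j hj
      rcases Finset.mem_insert.1 hj with rfl | hj
      · rw [hnew]; exact hf
      · rw [hold j hj]; exact hp j hj
    · intro i hi j hj hij
      rcases Finset.mem_insert.1 hi with hi' | hi' <;> rcases Finset.mem_insert.1 hj with hj' | hj'
      · exact absurd (hi'.trans hj'.symm) hij
      · rw [hi', hnew, hold j hj']; exact hdisj j hj'
      · rw [hj', hnew, hold i hi']; exact (hdisj i hi').symm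
      · rw [hold i hi', hold j hj']; exact hd i hi' j hj' hij
    · intro l
      rw [Finset.sum_insert ha, Finset.biUnion_insert, hnew]
      have e1 : (s.biUnion fun j => pathVerts (2 * L) (Function.update fs a f j)) = W :=
        Finset.biUnion_congr rfl fun j hj => by rw [hold j hj]
      rw [e1, Finset.union_inter_distrib_right]
      have e2 := path_use c (tr a) L f (fun i hi => Finset.sdiff_subset (fX i hi))
        (fun i hi => Finset.sdiff_subset (fY i hi)) (fun i hi => Finset.sdiff_subset (fZ i hi)) l
      have e3 : (((pathVerts (2 * L) f ∩ cls c l) ∪ (W ∩ cls c l)).card : ℝ) ≤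
          (pathVerts (2 * L) f ∩ cls c l).card + (W ∩ cls c l).card := by
        exact_mod_cast Finset.card_union_le _ _
      linarith [hu l]

lemma deg_pairs {V : Type} [Fintype V] [DecidableEq V] (H : Finset (Finset V))
    (h3 : ∀ e ∈ H, e.card = 3) (z : V) :
    2 * ((H.filter (fun e => z ∈ e)).card : ℝ) ≤ ∑ x, ∑ y, hind H (x, y, z) := by
  have e1 : ∑ x, ∑ y, hind H (x, y, z) =
      ((univ.filter fun p : V × V => ({p.1, p.2, z} : Finset V) ∈ H).card : ℝ) := by
    rw [← Fintype.sum_prod_type' (fun x y => hind H (x, y, z))]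
    simp [hind]
  rw [e1]
  have e2 : (H.filter (fun e => z ∈ e)).card * 2 ≤
      (univ.filter fun p : V × V => ({p.1, p.2, z} : Finset V) ∈ H).card := by
    have key := Finset.mul_card_image_le_card_of_maps_to
      (f := fun p : V × V => ({p.1, p.2, z} : Finset V))
      (s := univ.filter fun p : V × V => ({p.1, p.2, z} : Finset V) ∈ H)
      (t := H.filter (fun e => z ∈ e)) (by
        intro p hp
        have hp := (Finset.mem_filter.1 (Finset.mem_coe.1 hp)).2
        simp [hp]) 2 (by
        intro e he
        obtain ⟨heH, hz⟩ := Finset.mem_filter.1 he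
        have hc : (e.erase z).card = 2 := by rw [Finset.card_erase_of_mem hz, h3 e heH]
        obtain ⟨a, b, hab, hE⟩ := Finset.card_eq_two.1 hc
        have he' : e = {a, b, z} := by
          rw [← Finset.insert_erase hz, hE]
          ext v; simp; tauto
        have hsub : ({(a, b), (b, a)} : Finset (V × V)) ⊆
            (univ.filter fun p : V × V => ({p.1, p.2, z} : Finset V) ∈ H).filter
              (fun p => ({p.1, p.2, z} : Finset V) = e) := by
          intro p hp
          simp only [Finset.mem_insert, Finset.mem_singleton] at hp
          have e3 : ({b, a, z} : Finset V) = e := by rw [he', Finset.insert_comm]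
          rcases hp with rfl | rfl
          · simp only [Finset.mem_filter, Finset.mem_univ, true_and]
            exact ⟨he' ▸ heH, he'.symm⟩
          · simp only [Finset.mem_filter, Finset.mem_univ, true_and]
            exact ⟨e3.symm ▸ heH, e3⟩
        have hp2 : ({(a, b), (b, a)} : Finset (V × V)).card = 2 :=
          Finset.card_pair (by simp [hab])
        rw [← hp2]
        exact Finset.card_le_card hsub)
    omega
  exact_mod_cast (by omega : 2 * (H.filter (fun e => z ∈ e)).card ≤
      (univ.filter fun p : V × V => ({p.1, p.2, z} : Finset V) ∈ H).card)

/-! ### The reduced structure -/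

lemma sum_cls {V ι : Type} [Fintype V] [Fintype ι] [DecidableEq ι] (c : V → ι) :
    ∑ i, ((cls c i).card : ℝ) = Fintype.card V := by
  have := Finset.card_eq_sum_card_fiberwise (f := c) (s := (univ : Finset V)) (t := univ)
    (fun _ _ => by simp)
  rw [← Finset.card_univ, this]
  push_cast
  rfl

open Classical in
set_option maxHeartbeats 1000000 in
lemma reduced_tiling {V ι : Type} [Fintype V] [DecidableEq V] [Fintype ι] [DecidableEq ι]
    (H : Finset (Finset V)) (c : V → ι) (ε β n T : ℝ) (hn : (Fintype.card V : ℝ) = n)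
    (hn0 : 0 < n) (hε : 0 < ε) (hβ : 0 < β) (hT : 0 < T) (hιT : (Fintype.card ι : ℝ) ≤ T)
    (hreg : ∑ t ∈ univ.filter (fun t => ¬ LReg ε (hind H) c t), cellN c t ≤ ε * n ^ 3)
    (hdeg : ∀ z, (7 / 16 + 2 * β) * n ^ 2 ≤ ∑ x, ∑ y, hind H (x, y, z)) :
    ∃ h : ι × ι × ι → ℝ, (∀ t, 0 ≤ h t) ∧
      (∀ t, h t ≠ 0 → LReg ε (hind H) c t ∧ 2 * ε ≤ cellAv (hind H) (tcol c) t ∧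
        ε * n / T ≤ (cls c t.1).card ∧ ε * n / T ≤ (cls c t.2.1).card ∧
        ε * n / T ≤ (cls c t.2.2).card) ∧
      (∀ l, ∑ t, h t * use t l ≤ (cls c l).card) ∧ n - 6 * ε / β * n ≤ 4 * ∑ t, h t := by
  set m : ι → ℝ := fun i => ((cls c i).card : ℝ) with hm
  have hm0 : ∀ i, 0 ≤ m i := fun i => Nat.cast_nonneg _
  have hmsum : ∑ i, m i = n := by rw [← hn]; exact sum_cls c
  set κ := ε * n / T with hκ
  have hκ0 : 0 < κ := by positivity
  set R : Finset (ι × ι × ι) := univ.filter (fun t => LReg ε (hind H) c t ∧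
    2 * ε ≤ cellAv (hind H) (tcol c) t ∧ κ ≤ m t.1 ∧ κ ≤ m t.2.1 ∧ κ ≤ m t.2.2) with hR
  set e : ι × ι × ι → ℝ := fun t => cellAv (hind H) (tcol c) t * cellN c t with he
  have hN0 : ∀ t, 0 ≤ cellN c t := fun t => by unfold cellN; positivity
  have he0 : ∀ t, 0 ≤ e t := fun t =>
    mul_nonneg (cellAv_nonneg _ _ (hind_nonneg H) t) (hN0 t)
  have heN : ∀ t, e t ≤ cellN c t := fun t =>
    mul_le_of_le_one_left (hN0 t) (cellAv_le_one _ _ (hind_le_one H) t)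
  have heS : ∀ t, e t = ∑ w ∈ cls c t.1 ×ˢ cls c t.2.1 ×ˢ cls c t.2.2, hind H w := by
    intro t
    have := cellAv_mul_card (hind H) (tcol c) t
    rw [tcol_fiber] at this
    rw [← this]
    simp only [he, cellN, Finset.card_product]
    push_cast
    ring
  -- total waste
  have tN : ∑ t : ι × ι × ι, cellN c t = n ^ 3 := by
    simp only [cellN, Fintype.sum_prod_type]
    have : ∀ x y : ι, ∑ z, ((cls c x).card : ℝ) * (cls c y).card * (cls c z).card =
        m x * (m y * n) := by
      intro x y
      rw [← Finset.mul_sum, ← hmsum]; ring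
    simp only [this, ← Finset.mul_sum, ← Finset.sum_mul, hmsum]
    ring
  have t1 : ∑ t : ι × ι × ι, m t.2.1 * m t.2.2 = Fintype.card ι * n ^ 2 := by
    simp only [Fintype.sum_prod_type, ← Finset.mul_sum, ← Finset.sum_mul, hmsum,
      Finset.sum_const, Finset.card_univ, nsmul_eq_mul]
    ring
  have t2 : ∑ t : ι × ι × ι, m t.1 * m t.2.2 = Fintype.card ι * n ^ 2 := by
    simp only [Fintype.sum_prod_type, ← Finset.mul_sum, ← Finset.sum_mul, hmsum,
      Finset.sum_const, Finset.card_univ, nsmul_eq_mul]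
    ring
  have t3 : ∑ t : ι × ι × ι, m t.1 * m t.2.1 = Fintype.card ι * n ^ 2 := by
    simp only [Fintype.sum_prod_type, ← Finset.mul_sum, ← Finset.sum_mul, hmsum,
      Finset.sum_const, Finset.card_univ, nsmul_eq_mul]
    ring
  have hwaste : ∑ t ∈ univ.filter (fun t => t ∉ R), e t ≤ 6 * ε * n ^ 3 := by
    have pt : ∀ t, t ∉ R → e t ≤ (if ¬ LReg ε (hind H) c t then cellN c t else 0) +
        2 * ε * cellN c t + κ * (m t.2.1 * m t.2.2) + κ * (m t.1 * m t.2.2) +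
        κ * (m t.1 * m t.2.1) := by
      intro t ht
      have n1 : 0 ≤ κ * (m t.2.1 * m t.2.2) := mul_nonneg hκ0.le (mul_nonneg (hm0 _) (hm0 _))
      have n2 : 0 ≤ κ * (m t.1 * m t.2.2) := mul_nonneg hκ0.le (mul_nonneg (hm0 _) (hm0 _))
      have n3 : 0 ≤ κ * (m t.1 * m t.2.1) := mul_nonneg hκ0.le (mul_nonneg (hm0 _) (hm0 _))
      have n4 : 0 ≤ 2 * ε * cellN c t := mul_nonneg (by positivity) (hN0 t)
      have hNm : cellN c t = m t.1 * m t.2.1 * m t.2.2 := rfl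
      by_cases q : LReg ε (hind H) c t
      · simp only [q, not_true, if_false]
        by_cases q1 : 2 * ε ≤ cellAv (hind H) (tcol c) t
        · have := heN t
          by_cases q2 : κ ≤ m t.1
          · by_cases q3 : κ ≤ m t.2.1
            · have q4 : ¬ κ ≤ m t.2.2 := fun q4 => ht (by simp [hR, q, q1, q2, q3, q4])
              push Not at q4
              have : m t.1 * m t.2.1 * m t.2.2 ≤ m t.1 * m t.2.1 * κ :=
                mul_le_mul_of_nonneg_left q4.le (mul_nonneg (hm0 _) (hm0 _))
              nlinarith
            · push Not at q3
              have : m t.1 * m t.2.2 * m t.2.1 ≤ m t.1 * m t.2.2 * κ :=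
                mul_le_mul_of_nonneg_left q3.le (mul_nonneg (hm0 _) (hm0 _))
              nlinarith
          · push Not at q2
            have : m t.2.1 * m t.2.2 * m t.1 ≤ m t.2.1 * m t.2.2 * κ :=
                mul_le_mul_of_nonneg_left q2.le (mul_nonneg (hm0 _) (hm0 _))
            nlinarith
        · push Not at q1
          have : e t ≤ 2 * ε * cellN c t := mul_le_mul_of_nonneg_right q1.le (hN0 t)
          linarith
      · simp only [q, not_false_eq_true, if_true]
        linarith [heN t]
    have s1 : ∑ t ∈ univ.filter (fun t => t ∉ R), e t ≤
        ∑ t, ((if ¬ LReg ε (hind H) c t then cellN c t else 0) +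
        2 * ε * cellN c t + κ * (m t.2.1 * m t.2.2) + κ * (m t.1 * m t.2.2) +
        κ * (m t.1 * m t.2.1)) := by
      refine le_trans (Finset.sum_le_sum fun t ht => pt t (Finset.mem_filter.1 ht).2)
        (Finset.sum_le_sum_of_subset_of_nonneg (Finset.subset_univ _) fun t _ _ => ?_)
      have a1 : (0:ℝ) ≤ (if ¬ LReg ε (hind H) c t then cellN c t else 0) := by
        split_ifs
        · exact le_rfl
        · exact hN0 t
      have a2 := hN0 t
      have a3 := hm0 t.1
      have a4 := hm0 t.2.1
      have a5 := hm0 t.2.2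
      positivity
    rw [Finset.sum_add_distrib, Finset.sum_add_distrib, Finset.sum_add_distrib,
      Finset.sum_add_distrib, ← Finset.mul_sum, ← Finset.mul_sum, ← Finset.mul_sum,
      ← Finset.mul_sum, tN, t1, t2, t3, ← Finset.sum_filter] at s1
    have s2 : κ * (Fintype.card ι * n ^ 2) ≤ ε * n ^ 3 := by
      calc κ * (Fintype.card ι * n ^ 2) ≤ κ * (T * n ^ 2) := by gcongr
        _ = ε * n ^ 3 := by rw [hκ]; field_simp
    linarith
  -- per colour
  set ws : ι → ℝ := fun k => ∑ p ∈ univ.filter (fun p : ι × ι => (p.1, p.2, k) ∉ R), e (p.1, p.2, k)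
    with hws
  have hws0 : ∀ k, 0 ≤ ws k := fun k => Finset.sum_nonneg fun p _ => he0 _
  have hwsum : ∑ k, ws k = ∑ t ∈ univ.filter (fun t => t ∉ R), e t := by
    simp only [hws, Finset.sum_filter, Fintype.sum_prod_type]
    rw [Finset.sum_comm]
    refine Finset.sum_congr rfl fun i _ => ?_
    rw [Finset.sum_comm]
  set B : Finset ι := univ.filter (fun k => β * n ^ 2 * m k ≤ ws k) with hB
  have hBm : ∑ k ∈ B, m k ≤ 6 * ε / β * n := by
    have a1 : ∑ k ∈ B, β * n ^ 2 * m k ≤ 6 * ε * n ^ 3 := by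
      rw [← hwsum] at hwaste
      refine le_trans (Finset.sum_le_sum fun k hk => (Finset.mem_filter.1 hk).2) (le_trans ?_ hwaste)
      exact Finset.sum_le_sum_of_subset_of_nonneg (Finset.subset_univ _) fun k _ _ => hws0 k
    rw [← Finset.mul_sum] at a1
    have a2 : β * n ^ 2 * ∑ k ∈ B, m k ≤ β * n ^ 2 * (6 * ε / β * n) := by
      refine a1.trans (le_of_eq ?_)
      field_simp
    exact le_of_mul_le_mul_left a2 (by positivity)
  have hcol : ∀ k, (7 / 16 + 2 * β) * n ^ 2 * m k ≤ ∑ p : ι × ι, e (p.1, p.2, k) := by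
    intro k
    have a1 : ∑ p : ι × ι, e (p.1, p.2, k) = ∑ z ∈ cls c k, ∑ x, ∑ y, hind H (x, y, z) := by
      simp only [heS, Fintype.sum_prod_type, Finset.sum_product]
      have b1 : ∀ g : V → ℝ, ∑ i, ∑ x ∈ cls c i, g x = ∑ x, g x := fun g =>
        Finset.sum_fiberwise univ c g
      have b2 : ∀ i, ∑ j, ∑ x ∈ cls c i, ∑ y ∈ cls c j, ∑ z ∈ cls c k, hind H (x, y, z) =
          ∑ x ∈ cls c i, ∑ y, ∑ z ∈ cls c k, hind H (x, y, z) := by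
        intro i
        rw [Finset.sum_comm]
        exact Finset.sum_congr rfl fun x _ => b1 _
      simp only [b2]
      rw [b1, Finset.sum_comm (s := cls c k)]
      refine Finset.sum_congr rfl fun x _ => ?_
      rw [Finset.sum_comm]
    rw [a1]
    calc _ = ∑ z ∈ cls c k, (7 / 16 + 2 * β) * n ^ 2 := by
          rw [Finset.sum_const, nsmul_eq_mul]; ring
      _ ≤ _ := Finset.sum_le_sum fun z _ => hdeg z
  obtain ⟨h, h0, h1, h2, h4⟩ := frac_tiling m n hn0 hm0 hmsum R B (by
    intro k hk
    have hk : ws k < β * n ^ 2 * m k := by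
      by_contra hc
      push Not at hc
      exact hk (by simp [hB, hc])
    have hmk : 0 < m k := by
      by_contra hc
      have : m k = 0 := le_antisymm (not_lt.1 hc) (hm0 k)
      rw [this, mul_zero] at hk
      linarith [hws0 k]
    have a1 := hcol k
    rw [← Finset.sum_filter_add_sum_filter_not univ
      (fun p : ι × ι => (p.1, p.2, k) ∈ R)] at a1
    have a2 : ∑ p ∈ univ.filter (fun p : ι × ι => (p.1, p.2, k) ∈ R), e (p.1, p.2, k) ≤
        (∑ p ∈ univ.filter (fun p : ι × ι => (p.1, p.2, k) ∈ R), m p.1 * m p.2) * m k := by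
      rw [Finset.sum_mul]
      exact Finset.sum_le_sum fun p _ => heN _
    have a3 : (7 / 16 * n ^ 2) * m k <
        (∑ p ∈ univ.filter (fun p : ι × ι => (p.1, p.2, k) ∈ R), m p.1 * m p.2) * m k := by
      have : 0 < β * n ^ 2 * m k := by positivity
      have hk' : ∑ p ∈ univ.filter (fun p : ι × ι => ¬ (p.1, p.2, k) ∈ R), e (p.1, p.2, k)
        < β * n ^ 2 * m k := hk
      have hexp : (7 / 16 + 2 * β) * n ^ 2 * m k =
        7 / 16 * n ^ 2 * m k + 2 * (β * n ^ 2 * m k) := by ring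
      rw [hexp] at a1
      linarith
    exact lt_of_mul_lt_mul_right a3 hmk.le)
  refine ⟨h, h0, ?_, h2, by linarith⟩
  intro t ht
  by_contra hc
  exact ht (h1 t (fun htR => hc (Finset.mem_filter.1 htR).2))

lemma card_pathVerts {V : Type} [DecidableEq V] (H : Finset (Finset V)) (k : ℕ) (f : ℕ → V)
    (h : IsLoosePath H k f) : (pathVerts k f).card = 2 * k + 1 := by
  unfold pathVerts
  rw [Finset.card_image_of_injOn, Finset.card_range]
  intro i hi j hj hij
  have hi := Finset.mem_range.1 (Finset.mem_coe.1 hi)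
  have hj := Finset.mem_range.1 (Finset.mem_coe.1 hj)
  exact h.2.1 i (by omega) j (by omega) hij

/-- Given the fractional tiling, produce the paths. -/
lemma round_tiling {V ι : Type} [Fintype V] [DecidableEq V] [Fintype ι] [DecidableEq ι]
    (H : Finset (Finset V)) (h3 : ∀ e ∈ H, e.card = 3) (c : V → ι) (ε η n T : ℝ) (L : ℕ)
    (hL : 1 ≤ L) (hn : (Fintype.card V : ℝ) = n)
    (hn0 : 0 < n) (hε : 0 < ε) (hεη : ε ≤ η) (hη : η ≤ 1) (hT : 0 < T)
    (hLδ : 40 * (L : ℝ) < ε * (η * ε / T) ^ 3 * n)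
    (h : ι × ι × ι → ℝ) (h0 : ∀ t, 0 ≤ h t)
    (h1 : ∀ t, h t ≠ 0 → LReg ε (hind H) c t ∧ 2 * ε ≤ cellAv (hind H) (tcol c) t ∧
        ε * n / T ≤ (cls c t.1).card ∧ ε * n / T ≤ (cls c t.2.1).card ∧
        ε * n / T ≤ (cls c t.2.2).card)
    (h2 : ∀ l, ∑ t, h t * use t l ≤ (cls c l).card) :
    ∃ (q : ℕ) (fs : Fin q → ℕ → V), (∀ i, IsLoosePath H (2 * L) (fs i)) ∧
      (∀ i j, i ≠ j → Disjoint (pathVerts (2 * L) (fs i)) (pathVerts (2 * L) (fs j))) ∧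
      (1 - η) * (∑ t, h t) / (L + 1) - (Fintype.card ι : ℝ) ^ 3 ≤ q := by
  let Q : ι × ι × ι → ℕ := fun t => ⌊(1 - η) * h t / (L + 1)⌋₊
  have hη0 : 0 < η := lt_of_lt_of_le hε hεη
  have hL1 : (0:ℝ) < (L:ℝ) + 1 := by positivity
  have hQ : ∀ t, (Q t : ℝ) * (L + 1) ≤ (1 - η) * h t := by
    intro t
    have := Nat.floor_le (a := (1 - η) * h t / (L + 1))
      (div_nonneg (mul_nonneg (by linarith) (h0 t)) hL1.le)
    rwa [le_div_iff₀ hL1] at this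
  obtain ⟨fs, p1, p2, -⟩ := seq_paths (J := Σ t, Fin (Q t)) H h3 c (fun j => j.1) η
    (ε * (η * ε / T) ^ 3) L hL (by
      have : (0:ℝ) < Fintype.card V := by rw [hn]; exact hn0
      exact_mod_cast this) (by rw [hn]; exact hLδ) (by
      intro l
      rw [Fintype.sum_sigma]
      simp only [Finset.sum_const, Finset.card_univ, Fintype.card_fin, nsmul_eq_mul]
      calc ∑ t, (Q t : ℝ) * ((L + 1) * use t l) ≤ ∑ t, (1 - η) * (h t * use t l) := by
            refine Finset.sum_le_sum fun t _ => ?_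
            have := mul_le_mul_of_nonneg_right (hQ t) (use_nonneg t l)
            linarith
        _ = (1 - η) * ∑ t, h t * use t l := by rw [Finset.mul_sum]
        _ ≤ _ := mul_le_mul_of_nonneg_left (h2 l) (by linarith)) (by
      rintro ⟨t, j⟩ X Y Z hX hY hZ cX cY cZ
      simp only at hX hY hZ cX cY cZ
      have ht : h t ≠ 0 := by
        intro ht
        have : Q t = 0 := by simp [Q, ht]
        exact absurd j.2 (by omega)
      obtain ⟨r1, r2, r3, r4, r5⟩ := h1 t ht
      have lo := r1 X Y Z hX hY hZ (le_trans (by gcongr) cX) (le_trans (by gcongr) cY)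
        (le_trans (by gcongr) cZ)
      refine le_trans ?_ lo
      rw [hn]
      have dX : η * (ε * n / T) ≤ X.card := le_trans (by gcongr) cX
      have dY : η * (ε * n / T) ≤ Y.card := le_trans (by gcongr) cY
      have dZ : η * (ε * n / T) ≤ Z.card := le_trans (by gcongr) cZ
      calc ε * (η * ε / T) ^ 3 * n ^ 3 =
            ε * (η * (ε * n / T) * (η * (ε * n / T)) * (η * (ε * n / T))) := by ring
        _ ≤ ε * ((X.card : ℝ) * Y.card * Z.card) := by gcongr
        _ ≤ _ := by
          refine mul_le_mul_of_nonneg_right (by linarith) (by positivity)) univ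
  let E := Fintype.equivFin (Σ t, Fin (Q t))
  refine ⟨_, fun i => fs (E.symm i), fun i => p1 _ (Finset.mem_univ _), fun i j hij =>
    p2 _ (Finset.mem_univ _) _ (Finset.mem_univ _) (fun hh => hij (E.symm.injective hh)), ?_⟩
  rw [Fintype.card_sigma]
  push_cast
  simp only [Fintype.card_fin]
  have : ∀ t, (1 - η) * h t / (L + 1) - 1 ≤ (Q t : ℝ) := fun t => by
    have := Nat.lt_floor_add_one ((1 - η) * h t / (L + 1))
    linarith
  refine le_trans (le_of_eq ?_) (Finset.sum_le_sum fun t _ => this t)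
  rw [Finset.sum_sub_distrib, ← Finset.sum_div, ← Finset.mul_sum]
  simp
  ring

set_option maxHeartbeats 1000000 in
theorem path_tiling_lemma (γ α : ℝ) (hγ : 0 < γ) (hα : 0 < α) :
    ∃ p n₀ : ℕ, ∀ (V : Type) [Fintype V] [DecidableEq V], ∀ (H : Finset (Finset V)) (n : ℕ),
      Fintype.card V = n → n₀ < n →
      (∀ e ∈ H, e.card = 3) →
      (∀ v : V, (7 / 16 + γ) * (n.choose 2 : ℝ) ≤
        ((H.filter (fun e => v ∈ e)).card : ℝ)) →
      ∃ (q : ℕ) (ks : Fin q → ℕ) (fs : Fin q → ℕ → V),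
        q ≤ p ∧
        (∀ i, IsLoosePath H (ks i) (fs i)) ∧
        (∀ i j, i ≠ j → Disjoint (pathVerts (ks i) (fs i)) (pathVerts (ks j) (fs j))) ∧
        (((Finset.univ \ Finset.univ.biUnion fun i => pathVerts (ks i) (fs i)).card : ℝ)
          ≤ α * n) := by
  obtain ⟨a, ha0, ha1, haα⟩ : ∃ a : ℝ, 0 < a ∧ a ≤ 1 ∧ a ≤ α :=
    ⟨min α 1, lt_min hα one_pos, min_le_right _ _, min_le_left _ _⟩
  obtain ⟨ε, hε, hεη, hεβ⟩ : ∃ ε : ℝ, 0 < ε ∧ ε ≤ a / 4 ∧ ε ≤ γ / 4 * a / 24 :=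
    ⟨min (a / 4) (γ / 4 * a / 24), lt_min (by positivity) (by positivity), min_le_left _ _,
      min_le_right _ _⟩
  obtain ⟨T0, hreg⟩ := weak_regularity ε hε
  set T : ℝ := (T0 : ℝ) + 1 with hT
  have hT0 : 0 < T := by positivity
  obtain ⟨c0, hc0, hcδ, hcT⟩ : ∃ c0 : ℝ, 0 < c0 ∧ c0 ≤ ε * (a / 4 * ε / T) ^ 3 / 80 ∧
      c0 ≤ a / (20 * T ^ 3) :=
    ⟨min (ε * (a / 4 * ε / T) ^ 3 / 80) (a / (20 * T ^ 3)), lt_min (by positivity) (by positivity),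
      min_le_left _ _, min_le_right _ _⟩
  refine ⟨⌈1 / c0⌉₊, ⌈1 / c0⌉₊ + ⌈4 / (c0 * a)⌉₊ + ⌈(1 + 2 * γ) / γ⌉₊ + 1, ?_⟩
  intro V _ _ H n hV hn h3 hdeg
  have hnR : ((⌈1 / c0⌉₊ + ⌈4 / (c0 * a)⌉₊ + ⌈(1 + 2 * γ) / γ⌉₊ + 1 : ℕ) : ℝ) < n := by
    exact_mod_cast hn
  push_cast at hnR
  have g1 := Nat.le_ceil (1 / c0)
  have g2 := Nat.le_ceil (4 / (c0 * a))
  have g3 := Nat.le_ceil ((1 + 2 * γ) / γ)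
  have z1 : (0:ℝ) ≤ (⌈1 / c0⌉₊ : ℝ) := Nat.cast_nonneg _
  have z2 : (0:ℝ) ≤ (⌈4 / (c0 * a)⌉₊ : ℝ) := Nat.cast_nonneg _
  have z3 : (0:ℝ) ≤ (⌈(1 + 2 * γ) / γ⌉₊ : ℝ) := Nat.cast_nonneg _
  have n1 : 1 / c0 ≤ n := by linarith
  have n2 : 4 / (c0 * a) ≤ n := by linarith
  have n3 : (1 + 2 * γ) / γ ≤ n := by linarith
  have n0 : (0:ℝ) < n := by linarith
  rw [div_le_iff₀ (by positivity)] at n1 n2 n3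
  have hVn : (Fintype.card V : ℝ) = n := by rw [hV]
  have hdeg2 : ∀ z, (7 / 16 + 2 * (γ / 4)) * (n : ℝ) ^ 2 ≤ ∑ x, ∑ y, hind H (x, y, z) := by
    intro z
    have d1 := deg_pairs H h3 z
    have d2 := hdeg z
    rw [Nat.cast_choose_two] at d2
    have d3 : (7 / 16 + 2 * (γ / 4)) * (n : ℝ) ^ 2 ≤ (7 / 16 + γ) * ((n : ℝ) * (n - 1)) := by
      nlinarith
    linarith
  obtain ⟨ι, i1, i2, c, hcard, hirr⟩ := hreg V (hind H) (by
    have : (0:ℝ) < Fintype.card V := by rw [hVn]; exact n0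
    exact_mod_cast this) (hind_nonneg H) (hind_le_one H)
  have hιT : (Fintype.card ι : ℝ) ≤ T := by
    have : (Fintype.card ι : ℝ) ≤ T0 := by exact_mod_cast hcard
    linarith
  rw [hVn] at hirr
  obtain ⟨h, h0, h1, h2, h4⟩ := reduced_tiling H c ε (γ / 4) n T hVn n0 hε (by positivity) hT0 hιT
    hirr hdeg2
  set L := ⌊c0 * n⌋₊ with hLdef
  have hLle : (L : ℝ) ≤ c0 * n := Nat.floor_le (by positivity)
  have hLlt : c0 * n < L + 1 := Nat.lt_floor_add_one _
  have hL1 : 1 ≤ L := Nat.le_floor (by push_cast; linarith)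
  have hL1' : (1:ℝ) ≤ L := by exact_mod_cast hL1
  obtain ⟨q, fs, p1, p2, p3⟩ := round_tiling H h3 c ε (a / 4) n T L hL1 hVn n0 hε hεη
    (by linarith) hT0 (by
      have : c0 * n ≤ ε * (a / 4 * ε / T) ^ 3 / 80 * n := by gcongr
      have h5 : 0 < c0 * n := by positivity
      linarith) h h0 h1 h2
  have hcov : (univ.biUnion fun i => pathVerts (2 * L) (fs i)).card = q * (4 * L + 1) := by
    rw [Finset.card_biUnion (fun i _ j _ hij => p2 i j hij)]
    rw [Finset.sum_congr rfl fun i _ => card_pathVerts H (2 * L) (fs i) (p1 i)]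
    rw [Finset.sum_const, Finset.card_univ, Fintype.card_fin, smul_eq_mul]
    ring
  have hcovn : (q : ℝ) * (4 * L + 1) ≤ n := by
    have := Finset.card_le_univ (univ.biUnion fun i => pathVerts (2 * L) (fs i))
    rw [hcov, hV] at this
    exact_mod_cast this
  refine ⟨q, fun _ => 2 * L, fs, ?_, p1, p2, ?_⟩
  · have : (q : ℝ) ≤ ⌈1 / c0⌉₊ := by
      refine le_trans ?_ g1
      rw [le_div_iff₀ hc0]
      have q0 : (0:ℝ) ≤ q := Nat.cast_nonneg _
      have : (q : ℝ) * (c0 * n) ≤ 1 * n := by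
        refine le_trans ?_ (hcovn.trans_eq (one_mul _).symm)
        exact mul_le_mul_of_nonneg_left (by linarith) q0
      rw [← mul_assoc] at this
      exact le_of_mul_le_mul_right this n0
    exact_mod_cast this
  · have e1 : ((univ \ univ.biUnion fun i => pathVerts (2 * L) (fs i)).card : ℝ) =
        n - q * (4 * L + 1) := by
      rw [Finset.card_sdiff_of_subset (Finset.subset_univ _), Nat.cast_sub
        (Finset.card_le_card (Finset.subset_univ _)), Finset.card_univ, hV, hcov]
      push_cast; ring
    rw [e1]
    suffices hs : n - a * n ≤ (q : ℝ) * (4 * L + 1) by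
      have := mul_le_mul_of_nonneg_right haα n0.le
      linarith
    set S := ∑ t, h t with hS
    have hρ : 6 * ε / (γ / 4) ≤ a / 4 := by
      rw [div_le_iff₀ (by positivity)]; linarith
    have hS4 : (1 - a / 4) * n ≤ 4 * S := by
      have : 6 * ε / (γ / 4) * n ≤ a / 4 * n := by gcongr
      linarith
    have hx : 1 / ((L:ℝ) + 1) ≤ a / 4 := by
      rw [div_le_iff₀ (by positivity)]
      have := mul_le_mul_of_nonneg_left hLlt.le ha0.le
      linarith
    have hι3 : (Fintype.card ι : ℝ) ^ 3 * (4 * L + 1) ≤ a / 4 * n := by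
      have k1 : (4 * (L:ℝ) + 1) ≤ 5 * (c0 * n) := by linarith
      have k2 : (Fintype.card ι : ℝ) ^ 3 ≤ T ^ 3 := pow_le_pow_left₀ (Nat.cast_nonneg _) hιT 3
      calc (Fintype.card ι : ℝ) ^ 3 * (4 * L + 1) ≤ T ^ 3 * (5 * (c0 * n)) :=
            mul_le_mul k2 k1 (by positivity) (by positivity)
        _ ≤ T ^ 3 * (5 * (a / (20 * T ^ 3) * n)) := by gcongr
        _ = a / 4 * n := by field_simp; norm_num
    have m1 : ((1 - a / 4) * S / (L + 1) - (Fintype.card ι : ℝ) ^ 3) * (4 * L + 1) ≤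
        q * (4 * L + 1) := by gcongr
    have m2 : (1 - a / 4) * S / (L + 1) * (4 * L + 1) ≥
        (1 - a / 4) * ((1 - a / 4) * ((1 - a / 4) * n)) := by
      have m3 : (1 - a / 4) * S / (L + 1) * (4 * L + 1) =
          (1 - a / 4) * (S * ((4 * L + 1) / (L + 1))) := by ring
      have m4 : 4 * (1 - a / 4) ≤ (4 * (L:ℝ) + 1) / (L + 1) := by
        have : (4 * (L:ℝ) + 1) / (L + 1) = 4 - 3 * (1 / ((L:ℝ) + 1)) := by field_simp; ring
        rw [this]; linarith
      have S0 : 0 ≤ S := Finset.sum_nonneg fun t _ => h0 t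
      rw [m3]
      have b0 : 0 ≤ 1 - a / 4 := by linarith
      refine mul_le_mul_of_nonneg_left ?_ b0
      calc (1 - a / 4) * ((1 - a / 4) * n) ≤ (1 - a / 4) * (4 * S) :=
            mul_le_mul_of_nonneg_left hS4 b0
        _ = S * (4 * (1 - a / 4)) := by ring
        _ ≤ _ := mul_le_mul_of_nonneg_left m4 S0
    have m5 : (1 - 3 * (a / 4)) ≤ (1 - a / 4) * ((1 - a / 4) * (1 - a / 4)) := by
      nlinarith only [mul_nonneg (sq_nonneg a) (sub_nonneg.2 ha1), sq_nonneg a]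
    have m6 : (1 - 3 * (a / 4)) * n ≤ (1 - a / 4) * ((1 - a / 4) * ((1 - a / 4) * n)) := by
      have := mul_le_mul_of_nonneg_right m5 n0.le
      linarith
    rw [sub_mul] at m1
    linarith only [m1, m2, m6, hι3]
end

section
/- For all γ > 0 and α > 0 there exists n₀ such that the following holds. Suppose H is a 3-uniform hypergraph on n > n₀ vertices with δ₁(H) ≥ (7/16 + γ)·C(n,2). Then there is an M-tiling of H which covers all but at most αn vertices of H. -/
open Finset

/-- `g` describes a copy of the hypergraph `M` (vertices `{1,…,8}`, edges `{1,2,3}`,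
`{3,4,5}`, `{4,5,6}`, `{6,7,8}`) inside the `3`-uniform hypergraph `H`. -/
def IsMCopy {V : Type} [DecidableEq V] (H : Finset (Finset V)) (g : Fin 8 → V) : Prop :=
  Function.Injective g ∧
  ({g 0, g 1, g 2} : Finset V) ∈ H ∧ ({g 2, g 3, g 4} : Finset V) ∈ H ∧
  ({g 3, g 4, g 5} : Finset V) ∈ H ∧ ({g 5, g 6, g 7} : Finset V) ∈ H


lemma count_aux {ι : Type} [Fintype ι] [DecidableEq ι] (G : Finset ι) (s z : ι → ℝ)
    (hs : ∀ i, 0 ≤ s i) (hz : ∀ i ∈ G, 0 ≤ z i) (hsz : ∑ i ∈ G, s i * z i ≤ ∑ i ∈ G, s i) :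
    ∃ θ : ℝ, 0 ≤ θ ∧ θ ≤ 1 ∧
      ∑ i ∈ G, s i * ((if 8/5 * (1 - θ) ≤ z i then (8/5:ℝ) else 0) +
        (if 8/5 + 12/5 * θ ≤ z i then (12/5:ℝ) else 0)) ≤ ∑ i ∈ G, s i := by
  by_contra hcon
  push Not at hcon
  set F : ℝ → ι → ℝ := fun θ i => (if 8/5 * (1 - θ) ≤ z i then (8/5:ℝ) else 0) +
        (if 8/5 + 12/5 * θ ≤ z i then (12/5:ℝ) else 0) with hF
  have key : ∀ a : ℝ, IntervalIntegrable (fun θ : ℝ => if a ≤ θ then (1:ℝ) else 0)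
      MeasureTheory.volume 0 1 := by
    intro a
    apply Monotone.intervalIntegrable
    intro x y hxy
    dsimp only
    split_ifs <;> first | linarith | norm_num
  have key2 : ∀ a : ℝ, IntervalIntegrable (fun θ : ℝ => if θ ≤ a then (1:ℝ) else 0)
      MeasureTheory.volume 0 1 := by
    intro a
    apply Antitone.intervalIntegrable
    intro x y hxy
    dsimp only
    split_ifs <;> first | linarith | norm_num
  have e2 : ∀ a : ℝ, 0 ≤ a → a ≤ 1 → ∫ θ in (0:ℝ)..1, (if θ ≤ a then (1:ℝ) else 0) = a := by
    intro a h0 h1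
    rw [← intervalIntegral.integral_add_adjacent_intervals (b := a)
      ((key2 a).mono_set (by rw [Set.uIcc_of_le h0, Set.uIcc_of_le zero_le_one]; exact Set.Icc_subset_Icc le_rfl h1))
      ((key2 a).mono_set (by rw [Set.uIcc_of_le h1, Set.uIcc_of_le zero_le_one]; exact Set.Icc_subset_Icc h0 le_rfl))]
    rw [intervalIntegral.integral_congr_ae (g := fun _ => (1:ℝ)) (a := 0) (b := a),
      intervalIntegral.integral_congr_ae (g := fun _ => (0:ℝ)) (a := a) (b := 1)]
    · simp
    · refine Filter.Eventually.of_forall fun x hx => ?_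
      rw [Set.uIoc_of_le h1] at hx
      simp [hx.1]
    · refine Filter.Eventually.of_forall fun x hx => ?_
      rw [Set.uIoc_of_le h0] at hx
      simp [hx.2]
  have e1 : ∀ a : ℝ, 0 ≤ a → a ≤ 1 → ∫ θ in (0:ℝ)..1, (if a ≤ θ then (1:ℝ) else 0) = 1 - a := by
    intro a h0 h1
    rw [← e2 (1-a) (by linarith) (by linarith)]
    have := intervalIntegral.integral_comp_sub_left (a := 0) (b := 1)
      (fun θ => if θ ≤ 1 - a then (1:ℝ) else 0) 1
    simp only [sub_self, sub_zero] at this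
    rw [← this]
    congr 1; ext θ
    congr 1
    rw [eq_iff_iff]; constructor <;> intro h <;> linarith
  have hFe : ∀ i, (fun θ => F θ i) = fun θ => 8/5 * (if 1 - z i * (5/8) ≤ θ then (1:ℝ) else 0) +
      12/5 * (if θ ≤ (z i - 8/5) * (5/12) then (1:ℝ) else 0) := by
    intro i; ext θ
    simp only [hF]
    congr 1
    · rw [mul_ite]; simp only [mul_one, mul_zero]
      congr 1; rw [eq_iff_iff]; constructor <;> intro h <;> linarith
    · rw [mul_ite]; simp only [mul_one, mul_zero]
      congr 1; rw [eq_iff_iff]; constructor <;> intro h <;> linarith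
  have hint : ∀ i, IntervalIntegrable (fun θ => F θ i) MeasureTheory.volume 0 1 := by
    intro i
    rw [hFe]
    exact ((key _).const_mul _).add ((key2 _).const_mul _)
  have hb : ∀ i ∈ G, ∫ θ in (0:ℝ)..1, F θ i ≤ z i := by
    intro i hi
    rw [hFe]
    rw [intervalIntegral.integral_add ((key _).const_mul _) ((key2 _).const_mul _),
      intervalIntegral.integral_const_mul, intervalIntegral.integral_const_mul]
    have h0 := hz i hi
    rcases le_total (z i) (8/5) with h | h
    · rw [e1 _ (by linarith) (by linarith)]
      rcases lt_or_eq_of_le h with h' | h'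
      · have : ∫ θ in (0:ℝ)..1, (if θ ≤ (z i - 8/5) * (5/12) then (1:ℝ) else 0) = 0 := by
          rw [intervalIntegral.integral_congr (g := fun _ => (0:ℝ))]
          · simp
          · intro x hx
            rw [Set.uIcc_of_le zero_le_one] at hx
            have := hx.1
            simp only
            rw [if_neg]; intro h; linarith
        rw [this]; linarith
      · rw [e2 _ (by linarith) (by linarith)]; linarith
    · have : ∫ θ in (0:ℝ)..1, (if 1 - z i * (5/8) ≤ θ then (1:ℝ) else 0) = 1 := by
          rw [intervalIntegral.integral_congr (g := fun _ => (1:ℝ))]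
          · simp
          · intro x hx
            rw [Set.uIcc_of_le zero_le_one] at hx
            have := hx.1
            simp only
            rw [if_pos]; linarith
      rw [this]
      rcases le_total (z i) 4 with h' | h'
      · rw [e2 _ (by linarith) (by linarith)]; linarith
      · have : ∫ θ in (0:ℝ)..1, (if θ ≤ (z i - 8/5) * (5/12) then (1:ℝ) else 0) = 1 := by
          rw [intervalIntegral.integral_congr (g := fun _ => (1:ℝ))]
          · simp
          · intro x hx
            rw [Set.uIcc_of_le zero_le_one] at hx
            have := hx.2
            simp only
            rw [if_pos]; linarith
        rw [this]; linarith
  have hI : ∫ θ in (0:ℝ)..1, ∑ i ∈ G, s i * F θ i ≤ ∑ i ∈ G, s i := by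
    rw [intervalIntegral.integral_finsetSum (fun i _ => (hint i).const_mul _)]
    refine le_trans (Finset.sum_le_sum fun i hi => ?_) hsz
    rw [intervalIntegral.integral_const_mul]
    exact mul_le_mul_of_nonneg_left (hb i hi) (hs i)
  have hlt : ∫ θ in (0:ℝ)..1, (∑ i ∈ G, s i) < ∫ θ in (0:ℝ)..1, ∑ i ∈ G, s i * F θ i := by
    have h01 : (0:ℝ) < 1 := one_pos
    have hsumint : IntervalIntegrable (fun θ => ∑ i ∈ G, s i * F θ i) MeasureTheory.volume 0 1 := by
      have h := IntervalIntegrable.sum G (fun i (_ : i ∈ G) => (hint i).const_mul (s i))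
      have heq : (fun θ => ∑ i ∈ G, s i * F θ i) = ∑ i ∈ G, fun θ => s i * F θ i := by
        ext θ; simp
      rw [heq]; exact h
    refine intervalIntegral.integral_lt_integral_of_ae_le_of_measure_setOfPred_lt_ne_zero h01.le
      intervalIntegrable_const hsumint ?_ ?_
    · refine (MeasureTheory.ae_restrict_iff' measurableSet_Ioc).2 (Filter.Eventually.of_forall ?_)
      intro θ hθ
      exact (hcon θ hθ.1.le hθ.2).le
    · intro h0
      have h1 : (MeasureTheory.volume.restrict (Set.Ioc (0:ℝ) 1)) (Set.Ioc (0:ℝ) 1) = 0 := by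
        refine MeasureTheory.measure_mono_null ?_ h0
        intro θ hθ
        exact hcon θ hθ.1.le hθ.2
      simp at h1
  simp at hlt
  linarith

lemma count_lemma {ι : Type} [Fintype ι] [DecidableEq ι] (G : Finset ι) (s z : ι → ℝ)
    (hs : ∀ i, 0 ≤ s i) (hz : ∀ i ∈ G, 0 ≤ z i) (hsz : ∑ i ∈ G, s i * z i ≤ ∑ i ∈ G, s i) 
    (Q : ι → ι → Prop) [∀ i j, Decidable (Q i j)]
    (hQ : ∀ i ∈ G, ∀ j ∈ G, Q i j → 8 ≤ 3 * z i + 2 * z j ∧ 8 ≤ 2 * z i + 3 * z j) :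
    ∑ i ∈ G, ∑ j ∈ G, (if Q i j then s i * s j else 0) ≤ 7/16 * (∑ i ∈ G, s i)^2 := by
  obtain ⟨θ, h0, h1, h⟩ := count_aux G s z hs hz hsz
  set S := ∑ i ∈ G, s i with hS
  -- indicator of A and B
  set A : ι → ℝ := fun i => if 8/5 + 12/5 * θ ≤ z i then 1 else 0 with hA
  set B : ι → ℝ := fun i => if 8/5 * (1 - θ) ≤ z i then (if 8/5 + 12/5 * θ ≤ z i then 0 else 1) else 0 with hB
  set a := ∑ i ∈ G, s i * A i with ha
  set b := ∑ i ∈ G, s i * B i with hb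
  have ha0 : 0 ≤ a := Finset.sum_nonneg fun i _ => mul_nonneg (hs i) (by simp only [hA]; split_ifs <;> norm_num)
  have hb0 : 0 ≤ b := Finset.sum_nonneg fun i _ => mul_nonneg (hs i) (by simp only [hB]; split_ifs <;> norm_num)
  have hab : 4 * a + 8/5 * b ≤ S := by
    refine le_trans (le_of_eq ?_) h
    rw [ha, hb, Finset.mul_sum, Finset.mul_sum, ← Finset.sum_add_distrib]
    refine Finset.sum_congr rfl fun i _ => ?_
    simp only [hA, hB]
    split_ifs <;> first | (exfalso; linarith) | ring
  have hle : ∑ i ∈ G, ∑ j ∈ G, (if Q i j then s i * s j else 0) ≤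
      ∑ i ∈ G, ∑ j ∈ G, ((s i * A i) * s j + s i * (s j * A j) - (s i * A i) * (s j * A j)
        + (s i * B i) * (s j * B j)) := by
    refine Finset.sum_le_sum fun i hi => Finset.sum_le_sum fun j hj => ?_
    have hij := mul_nonneg (hs i) (hs j)
    have : (s i * A i) * s j + s i * (s j * A j) - (s i * A i) * (s j * A j)
        + (s i * B i) * (s j * B j) = s i * s j * (A i + A j - A i * A j + B i * B j) := by ring
    rw [this]
    by_cases hq : Q i j
    · rw [if_pos hq]
      obtain ⟨q1, q2⟩ := hQ i hi j hj hq
      have : A i + A j - A i * A j + B i * B j = 1 := by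
        simp only [hA, hB]
        split_ifs <;> first | (exfalso; linarith) | norm_num
      rw [this]; linarith
    · rw [if_neg hq]
      refine mul_nonneg hij ?_
      simp only [hA, hB]
      split_ifs <;> norm_num
  have heq : ∑ i ∈ G, ∑ j ∈ G, ((s i * A i) * s j + s i * (s j * A j) - (s i * A i) * (s j * A j)
        + (s i * B i) * (s j * B j)) = a * S + S * a - a * a + b * b := by
    simp only [Finset.sum_add_distrib, Finset.sum_sub_distrib, ← Finset.mul_sum, ← Finset.sum_mul]
    rfl
  rw [heq] at hle
  refine hle.trans ?_
  have hb2 : b * b ≤ (5/8 * (S - 4 * a)) * (5/8 * (S - 4 * a)) :=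
    mul_self_le_mul_self hb0 (by linarith)
  nlinarith [mul_nonneg (show 0 ≤ S - 4 * a by linarith) ha0, mul_self_nonneg (S - 4*a), sq_nonneg S, mul_nonneg (show 0 ≤ S - 4 * a by linarith) (show 0 ≤ S by linarith)]

def tau {ι : Type} [DecidableEq ι] (t : ι × ι × ι) (p : ι) : ℕ :=
  3 * (if t.1 = p then 1 else 0) + 3 * (if t.2.1 = p then 1 else 0) + 2 * (if t.2.2 = p then 1 else 0)

lemma tau_sum {ι : Type} [Fintype ι] [DecidableEq ι] (t : ι × ι × ι) (y : ι → ℝ) :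
    ∑ p, (tau t p : ℝ) * y p = 3 * y t.1 + 3 * y t.2.1 + 2 * y t.2.2 := by
  simp [tau, add_mul, Finset.sum_add_distrib]

lemma lp_lemma {ι : Type} [Fintype ι] [DecidableEq ι] (G : Finset ι) (s : ι → ℝ)
    (hs : ∀ i, 0 ≤ s i) (hG : ∀ i ∉ G, s i = 0) (hS : 0 < ∑ i ∈ G, s i)
    (R : ι × ι × ι → Prop) [DecidablePred R] (hR : ∀ i j k, R (i, j, k) → R (i, k, j))
    (hdeg : ∀ i ∈ G, 7/16 * (∑ i ∈ G, s i)^2 <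
      ∑ j ∈ G, ∑ k ∈ G, (if R (i, j, k) then s j * s k else 0)) :
    ∃ w : ι × ι × ι → ℝ, (∀ t, 0 ≤ w t) ∧ (∀ t, w t ≠ 0 → R t) ∧
      ∀ p, ∑ t, w t * tau t p = s p := by
  set S := ∑ i ∈ G, s i with hSdef
  set Φ : (ι × ι × ι → ℝ) →ₗ[ℝ] (ι → ℝ) :=
    { toFun := fun w p => ∑ t, w t * tau t p
      map_add' := by intro a b; ext p; simp [add_mul, Finset.sum_add_distrib]
      map_smul' := by intro a b; ext p; simp [mul_assoc, Finset.mul_sum] } with hΦ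
  set K : Set (ι × ι × ι → ℝ) := stdSimplex ℝ (ι × ι × ι) ∩ {w | ∀ t, ¬ R t → w t = 0} with hK
  have hKc : IsCompact K := by
    refine (isCompact_stdSimplex ℝ _).inter_right ?_
    have : {w : ι × ι × ι → ℝ | ∀ t, ¬ R t → w t = 0} = ⋂ t, ⋂ (_ : ¬ R t), {w | w t = 0} := by
      ext; simp
    rw [this]
    exact isClosed_iInter fun t => isClosed_iInter fun _ =>
      isClosed_eq (continuous_apply t) continuous_const
  have hKv : Convex ℝ K := by
    refine (convex_stdSimplex ℝ _).inter ?_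
    intro a ha b hb p q _ _ _ t ht
    simp [ha t ht, hb t ht]
  have hΦc : Continuous Φ := LinearMap.continuous_of_finiteDimensional Φ
  by_cases hmem : (fun p => 8 / S * s p) ∈ Φ '' K
  · obtain ⟨w, hw, he⟩ := hmem
    refine ⟨fun t => S / 8 * w t, fun t => mul_nonneg (by positivity) (hw.1.1 t), ?_, ?_⟩
    · intro t ht
      by_contra hr
      exact ht (by simp [hw.2 t hr])
    · intro p
      have := congrFun he p
      simp only [hΦ, LinearMap.coe_mk, AddHom.coe_mk] at this
      simp only [mul_assoc, ← Finset.mul_sum]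
      rw [this]; field_simp
  · exfalso
    obtain ⟨f, u, hfu, hf⟩ := geometric_hahn_banach_point_closed (hKv.linear_image Φ)
      (hKc.image hΦc).isClosed hmem
    set y : ι → ℝ := fun p => f (Pi.single p 1) - u / 8 with hy
    have hfx : ∀ x : ι → ℝ, f x = ∑ p, x p * f (Pi.single p 1) := by
      intro x
      conv_lhs => rw [pi_eq_sum_univ' x]
      rw [map_sum]
      refine Finset.sum_congr rfl fun p _ => ?_
      rw [map_smul, smul_eq_mul]
    have hsum : ∑ p, s p = S := by
      rw [hSdef]; symm
      exact Finset.sum_subset (Finset.subset_univ _) fun i _ hi => hG i hi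
    have h1 : ∑ p ∈ G, s p * y p < 0 := by
      have : ∑ p ∈ G, s p * y p = ∑ p, s p * y p :=
        Finset.sum_subset (Finset.subset_univ _) fun i _ hi => by simp [hG i hi]
      rw [this]
      rw [hfx] at hfu
      simp only [mul_assoc, ← Finset.mul_sum] at hfu
      simp only [hy, mul_sub, Finset.sum_sub_distrib, ← Finset.sum_mul, hsum]
      rw [div_mul_eq_mul_div, div_lt_iff₀ hS] at hfu
      linarith
    have h2 : ∀ t, R t → 0 < 3 * y t.1 + 3 * y t.2.1 + 2 * y t.2.2 := by
      intro t ht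
      have hm : Pi.single t (1:ℝ) ∈ K := by
        refine ⟨single_mem_stdSimplex ℝ t, ?_⟩
        intro t' ht'
        have : t' ≠ t := by rintro rfl; exact ht' ht
        simp [this]
      have := hf _ ⟨_, hm, rfl⟩
      rw [hfx] at this
      have h3 : ∀ p, Φ (Pi.single t 1) p = tau t p := by
        intro p
        simp only [hΦ, LinearMap.coe_mk, AddHom.coe_mk]
        simp [Pi.single_apply]
      simp only [h3, tau_sum] at this
      simp only [hy]
      linarith
    have hGne : G.Nonempty := by
      by_contra h
      rw [Finset.not_nonempty_iff_eq_empty] at h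
      simp [h] at h1
    obtain ⟨i0, hi0, hmin⟩ := Finset.exists_min_image G y hGne
    have hm : y i0 < 0 := by
      by_contra h
      push Not at h
      exact absurd h1 (not_lt.2 (Finset.sum_nonneg fun i hi =>
        mul_nonneg (hs i) (h.trans (hmin i hi))))
    set m := - y i0 with hmdef
    have hmpos : 0 < m := by linarith
    have hcount := count_lemma G s (fun i => (y i + m) / m) hs
      (fun i hi => div_nonneg (by have := hmin i hi; linarith) hmpos.le)
      (by
        have : ∑ i ∈ G, s i * ((y i + m) / m) = (∑ i ∈ G, s i * y i) / m + S := by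
          rw [hSdef, Finset.sum_div, ← Finset.sum_add_distrib]
          refine Finset.sum_congr rfl fun i _ => ?_
          field_simp
        rw [this]
        have : (∑ i ∈ G, s i * y i) / m ≤ 0 := div_nonpos_of_nonpos_of_nonneg h1.le hmpos.le
        linarith)
      (fun j k => R (i0, j, k))
      (by
        intro j hj k hk hr
        have a1 := h2 _ hr
        have a2 := h2 _ (hR _ _ _ hr)
        simp only at a1 a2
        constructor
        · rw [← mul_div_assoc, ← mul_div_assoc, ← add_div, le_div_iff₀ hmpos]; linarith
        · rw [← mul_div_assoc, ← mul_div_assoc, ← add_div, le_div_iff₀ hmpos]; linarith)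
    exact absurd (hdeg i0 hi0) (not_lt.2 hcount)

/-- energy of a colouring -/
noncomputable def ener {Ω κ : Type} [Fintype Ω] [Fintype κ] [DecidableEq κ] (f : Ω → ℝ) (C : Ω → κ) : ℝ :=
  ∑ t : κ, (∑ o with C o = t, f o) ^ 2 / ((univ.filter fun o => C o = t).card : ℝ)

lemma ener_test {Ω κ : Type} [Fintype Ω] [Fintype κ] [DecidableEq κ] (f : Ω → ℝ) (C : Ω → κ)
    (g : κ → ℝ) : ∑ o, (2 * g (C o) * f o - g (C o) ^ 2) ≤ ener f C := by
  rw [← Finset.sum_fiberwise univ C, ener]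
  refine Finset.sum_le_sum fun t _ => ?_
  have : ∑ o with C o = t, (2 * g (C o) * f o - g (C o) ^ 2) =
      2 * g t * (∑ o with C o = t, f o) - (univ.filter fun o => C o = t).card * g t ^ 2 := by
    rw [Finset.mul_sum, ← nsmul_eq_mul, ← Finset.sum_const, ← Finset.sum_sub_distrib]
    refine Finset.sum_congr rfl fun o ho => ?_
    rw [(Finset.mem_filter.1 ho).2]
  rw [this]
  rcases Nat.eq_zero_or_pos (univ.filter fun o => C o = t).card with h | h
  · have h' := Finset.card_eq_zero.1 h
    simp [h']
  · have h' : (0:ℝ) < (univ.filter fun o => C o = t).card := by exact_mod_cast h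
    rw [le_div_iff₀ h']
    nlinarith [sq_nonneg ((∑ o with C o = t, f o) - (univ.filter fun o => C o = t).card * g t)]

lemma ener_le {Ω κ : Type} [Fintype Ω] [Fintype κ] [DecidableEq κ] (f : Ω → ℝ) (C : Ω → κ)
    (h0 : ∀ o, 0 ≤ f o) (h1 : ∀ o, f o ≤ 1) : ener f C ≤ Fintype.card Ω := by
  have : (Fintype.card Ω : ℝ) = ∑ t : κ, ((univ.filter fun o => C o = t).card : ℝ) := by
    rw [← Finset.card_univ, Finset.card_eq_sum_card_fiberwise (f := C) (t := univ) (by simp)]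
    push_cast; rfl
  rw [this, ener]
  refine Finset.sum_le_sum fun t _ => ?_
  set N : ℝ := ((univ.filter fun o => C o = t).card : ℝ) with hN
  have hle : ∑ o with C o = t, f o ≤ N := by
    calc ∑ o with C o = t, f o ≤ ∑ o with C o = t, (1:ℝ) := Finset.sum_le_sum fun o _ => h1 o
      _ = N := by simp [hN]
  have hge : 0 ≤ ∑ o with C o = t, f o := Finset.sum_nonneg fun o _ => h0 o
  have hN0 : 0 ≤ N := by positivity
  refine div_le_of_le_mul₀ hN0 hN0 ?_
  nlinarith

/-- generic increment -/
lemma ener_incr {Ω κ κ' : Type} [Fintype Ω] [DecidableEq Ω] [Fintype κ] [DecidableEq κ] [Fintype κ'] [DecidableEq κ']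
    (f : Ω → ℝ) (C : Ω → κ) (C' : Ω → κ') (d : ℝ) (hd : 0 < d)
    (B : Finset κ) (hole : κ → Finset Ω) (hsub : ∀ t ∈ B, ∀ o ∈ hole t, C o = t)
    (π : κ' → κ) (hπ : ∀ o, π (C' o) = C o)
    (hp : κ' → Prop) [DecidablePred hp] (hhp : ∀ o, hp (C' o) ↔ (C o ∈ B ∧ o ∈ hole (C o)))
    (hdens : ∀ t ∈ B, 2 * d * (univ.filter fun o => C o = t).card ≤ ∑ o with C o = t, f o)
    (hlow : ∀ t ∈ B, ∑ o ∈ hole t, f o ≤ d * (hole t).card) :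
    ener f C + ∑ t ∈ B, d ^ 2 * (hole t).card ≤ ener f C' := by
  set d0 : κ → ℝ := fun t => (∑ o with C o = t, f o) / ((univ.filter fun o => C o = t).card : ℝ) with hd0
  set g : κ' → ℝ := fun a => d0 (π a) - if hp a then d else 0 with hg
  refine le_trans ?_ (ener_test f C' g)
  have hB : ∑ t ∈ B, d ^ 2 * ((hole t).card : ℝ) =
      ∑ t, if t ∈ B then d ^ 2 * ((hole t).card : ℝ) else 0 := by
    rw [Finset.sum_ite_mem, Finset.univ_inter]
  rw [← Finset.sum_fiberwise univ C, ener, hB, ← Finset.sum_add_distrib]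
  refine Finset.sum_le_sum fun t _ => ?_
  set S := ∑ o with C o = t, f o with hS
  set N : ℝ := ((univ.filter fun o => C o = t).card : ℝ) with hN
  have e0 : S ^ 2 / N = ∑ o with C o = t, (2 * d0 t * f o - d0 t ^ 2) := by
    rw [Finset.sum_sub_distrib, ← Finset.mul_sum, Finset.sum_const, nsmul_eq_mul, ← hS, ← hN]
    have : d0 t = S / N := rfl
    rw [this]
    by_cases h : N = 0
    · simp [h]
    · field_simp; ring
  by_cases ht : t ∈ B
  · rw [if_pos ht, e0]
    have e1 : ∑ o with C o = t, (2 * g (C' o) * f o - g (C' o) ^ 2) =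
        ∑ o with C o = t, ((2 * d0 t * f o - d0 t ^ 2) +
          if o ∈ hole t then (- 2 * d * f o + 2 * d0 t * d - d ^ 2) else 0) := by
      refine Finset.sum_congr rfl fun o ho => ?_
      have ho := (Finset.mem_filter.1 ho).2
      simp only [hg, hπ, hhp, ho, ht, true_and]
      split_ifs <;> ring
    have e2 : (univ.filter fun o => C o = t) ∩ hole t = hole t := by
      ext o; simp only [mem_inter, mem_filter, mem_univ, true_and]
      exact ⟨fun h => h.2, fun h => ⟨hsub t ht o h, h⟩⟩
    rw [e1, Finset.sum_add_distrib, Finset.sum_ite_mem, e2]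
    have e3 : ∑ o ∈ hole t, (- 2 * d * f o + 2 * d0 t * d - d ^ 2) =
        -2 * d * ∑ o ∈ hole t, f o + (hole t).card * (2 * d0 t * d - d ^ 2) := by
      rw [Finset.mul_sum, ← nsmul_eq_mul, ← Finset.sum_const, ← Finset.sum_add_distrib]
      refine Finset.sum_congr rfl fun o _ => by ring
    rw [e3]
    have h1 := hlow t ht
    have h2 := hdens t ht
    rcases Nat.eq_zero_or_pos (hole t).card with h | h
    · have h' := Finset.card_eq_zero.1 h
      simp [h']
    · have hNpos : 0 < N := by
        rw [hN]; norm_cast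
        refine lt_of_lt_of_le h (Finset.card_le_card ?_)
        rw [← e2]; exact Finset.inter_subset_left
      have h3 : 2 * d ≤ d0 t := by
        have : d0 t = S / N := rfl
        rw [this, le_div_iff₀ hNpos]; exact h2
      have hc : (0:ℝ) < (hole t).card := by exact_mod_cast h
      nlinarith [mul_le_mul_of_nonneg_left h1 hd.le, mul_le_mul_of_nonneg_left h3 (mul_pos hc hd).le]
  · rw [if_neg ht, add_zero, e0]
    refine le_of_eq (Finset.sum_congr rfl fun o ho => ?_)
    have ho := (Finset.mem_filter.1 ho).2
    have : ¬ hp (C' o) := by rw [hhp, ho]; exact fun h => ht h.1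
    simp only [hg, hπ, ho, if_neg this, sub_zero]

def part {V ι : Type} [Fintype V] [DecidableEq ι] (c : V → ι) (i : ι) : Finset V :=
  univ.filter fun v => c v = i

def cell {V ι : Type} [Fintype V] [DecidableEq ι] (c : V → ι) (t : ι × ι × ι) : Finset (V × V × V) :=
  part c t.1 ×ˢ part c t.2.1 ×ˢ part c t.2.2

def Good {V ι : Type} [Fintype V] [DecidableEq ι] (f : V × V × V → ℝ) (c : V → ι) (d ε : ℝ)
    (t : ι × ι × ι) : Prop :=
  ∀ X ⊆ part c t.1, ∀ Y ⊆ part c t.2.1, ∀ Z ⊆ part c t.2.2,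
    ε * (part c t.1).card ≤ X.card → ε * (part c t.2.1).card ≤ Y.card →
    ε * (part c t.2.2).card ≤ Z.card →
    d * (X ×ˢ Y ×ˢ Z).card ≤ ∑ o ∈ X ×ˢ Y ×ˢ Z, f o

def col3 {V ι : Type} (c : V → ι) (o : V × V × V) : ι × ι × ι := (c o.1, c o.2.1, c o.2.2)

lemma cell_eq {V ι : Type} [Fintype V] [DecidableEq V] [DecidableEq ι] (c : V → ι) (t : ι × ι × ι) :
    (univ.filter fun o => col3 c o = t) = cell c t := by
  ext ⟨x, y, z⟩
  obtain ⟨i, j, k⟩ := t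
  simp [cell, part, col3]

def Bad {V ι : Type} [Fintype V] [DecidableEq ι] (f : V × V × V → ℝ) (c : V → ι) (d ε : ℝ)
    (t : ι × ι × ι) : Prop :=
  2 * d * (cell c t).card ≤ ∑ o ∈ cell c t, f o ∧ ¬ Good f c d ε t

open Classical in
lemma step {V ι : Type} [Fintype V] [DecidableEq V] [Fintype ι] [DecidableEq ι]
    (f : V × V × V → ℝ) (c : V → ι) (d ε η : ℝ) (hd : 0 < d) (hε : 0 < ε)
    (hbad : η * (Fintype.card V : ℝ) ^ 3 < ∑ t with Bad f c d ε t, ((cell c t).card : ℝ)) :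
    ∃ c' : V → ι × (ι × ι × ι → Bool × Bool × Bool),
      ener f (col3 c) + η * (d ^ 2 * ε ^ 3) * (Fintype.card V : ℝ) ^ 3 ≤ ener f (col3 c') := by
  have hw : ∀ t, ∃ X Y Z : Finset V, Bad f c d ε t → (X ⊆ part c t.1 ∧ Y ⊆ part c t.2.1 ∧
      Z ⊆ part c t.2.2 ∧ ε * (part c t.1).card ≤ X.card ∧ ε * (part c t.2.1).card ≤ Y.card ∧
      ε * (part c t.2.2).card ≤ Z.card ∧ ∑ o ∈ X ×ˢ Y ×ˢ Z, f o ≤ d * (X ×ˢ Y ×ˢ Z).card) := by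
    intro t
    by_cases h : Bad f c d ε t
    · have h2 := h.2
      simp only [Good] at h2
      push Not at h2
      obtain ⟨X, hX, Y, hY, Z, hZ, a, b, e, hh⟩ := h2
      exact ⟨X, Y, Z, fun _ => ⟨hX, hY, hZ, a, b, e, hh.le⟩⟩
    · exact ⟨∅, ∅, ∅, fun h' => absurd h' h⟩
  choose X Y Z hXYZ using hw
  refine ⟨fun v => (c v, fun t => (decide (v ∈ X t), decide (v ∈ Y t), decide (v ∈ Z t))), ?_⟩
  set c' : V → ι × (ι × ι × ι → Bool × Bool × Bool) :=
    fun v => (c v, fun t => (decide (v ∈ X t), decide (v ∈ Y t), decide (v ∈ Z t))) with hc'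
  have key := ener_incr f (col3 c) (col3 c') d hd (univ.filter fun t => Bad f c d ε t)
    (fun t => X t ×ˢ Y t ×ˢ Z t)
    (by
      intro t ht o ho
      obtain ⟨h1, h2, h3, -⟩ := hXYZ t (Finset.mem_filter.1 ht).2
      simp only [mem_product] at ho
      have a := (Finset.mem_filter.1 (h1 ho.1)).2
      have b := (Finset.mem_filter.1 (h2 ho.2.1)).2
      have e := (Finset.mem_filter.1 (h3 ho.2.2)).2
      simp only [col3]
      rw [a, b, e])
    (fun a => (a.1.1, a.2.1.1, a.2.2.1)) (by intro o; rfl)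
    (fun a => Bad f c d ε (a.1.1, a.2.1.1, a.2.2.1) ∧
      (a.1.2 (a.1.1, a.2.1.1, a.2.2.1)).1 = true ∧
      (a.2.1.2 (a.1.1, a.2.1.1, a.2.2.1)).2.1 = true ∧
      (a.2.2.2 (a.1.1, a.2.1.1, a.2.2.1)).2.2 = true)
    (by
      intro o
      simp [col3, hc'])
    (by
      intro t ht
      rw [cell_eq]
      exact (Finset.mem_filter.1 ht).2.1)
    (by
      intro t ht
      exact (hXYZ t (Finset.mem_filter.1 ht).2).2.2.2.2.2.2)
  refine le_trans ?_ key
  have : ∑ t with Bad f c d ε t, d ^ 2 * ε ^ 3 * ((cell c t).card : ℝ) ≤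
      ∑ t with Bad f c d ε t, d ^ 2 * ((X t ×ˢ Y t ×ˢ Z t).card : ℝ) := by
    refine Finset.sum_le_sum fun t ht => ?_
    obtain ⟨-, -, -, h1, h2, h3, -⟩ := hXYZ t (Finset.mem_filter.1 ht).2
    rw [mul_assoc]
    refine mul_le_mul_of_nonneg_left ?_ (by positivity)
    simp only [cell, Finset.card_product]
    push_cast
    calc ε ^ 3 * (((part c t.1).card : ℝ) * ((part c t.2.1).card * (part c t.2.2).card))
        = (ε * (part c t.1).card) * ((ε * (part c t.2.1).card) * (ε * (part c t.2.2).card)) := by ring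
      _ ≤ _ := by gcongr
  rw [← Finset.mul_sum] at this
  have h5 := mul_le_mul_of_nonneg_left hbad.le (show 0 ≤ d ^ 2 * ε ^ 3 by positivity)
  linarith

open Classical in
lemma reg_iter (d ε η : ℝ) (hd : 0 < d) (hε : 0 < ε) (k : ℕ) :
    ∃ L0 : ℕ, ∀ (V : Type) [Fintype V] [DecidableEq V] (f : V × V × V → ℝ), (∀ o, 0 ≤ f o) →
      ∃ L ≤ L0, ∃ c : V → Fin L,
        (∑ t with Bad f c d ε t, ((cell c t).card : ℝ) ≤ η * (Fintype.card V : ℝ) ^ 3) ∨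
        k * (η * (d ^ 2 * ε ^ 3)) * (Fintype.card V : ℝ) ^ 3 ≤ ener f (col3 c) := by
  induction k with
  | zero =>
    refine ⟨1, fun V _ _ f hf => ⟨1, le_rfl, fun _ => 0, Or.inr ?_⟩⟩
    simp only [Nat.cast_zero, zero_mul]
    exact Finset.sum_nonneg fun t _ => by positivity
  | succ k ih =>
    obtain ⟨L0, hL⟩ := ih
    refine ⟨L0 + L0 * 8 ^ (L0 * (L0 * L0)), fun V _ _ f hf => ?_⟩
    obtain ⟨L, hL0, c, hc⟩ := hL V f hf
    by_cases hb : ∑ t with Bad f c d ε t, ((cell c t).card : ℝ) ≤ η * (Fintype.card V : ℝ) ^ 3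
    · exact ⟨L, by omega, c, Or.inl hb⟩
    · have h1 := hc.resolve_left hb
      push Not at hb
      obtain ⟨c', hc'⟩ := step f c d ε η hd hε hb
      have e : (Fin L × (Fin L × Fin L × Fin L → Bool × Bool × Bool)) ≃
        Fin (L * 8 ^ (L * (L * L))) := Fintype.equivFinOfCardEq (by simp)
      refine ⟨L * 8 ^ (L * (L * L)), ?_, fun v => e (c' v), Or.inr ?_⟩
      · have : L * 8 ^ (L * (L * L)) ≤ L0 * 8 ^ (L0 * (L0 * L0)) := by
          gcongr
          norm_num
        omega
      · have h3 : ener f (col3 fun v => e (c' v)) = ener f (col3 c') := by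
          unfold ener
          symm
          refine Fintype.sum_equiv (e.prodCongr (e.prodCongr e)) _ _ ?_
          intro t
          have : (univ.filter fun o => col3 (fun v => e (c' v)) o = (e.prodCongr (e.prodCongr e)) t)
              = univ.filter fun o => col3 c' o = t := by
            ext ⟨x, y, z⟩; obtain ⟨i, j, k⟩ := t
            simp [col3]
          rw [this]
        rw [h3]; push_cast; linarith

open Classical in
lemma regularity (d ε η : ℝ) (hd : 0 < d) (hε : 0 < ε) (hη : 0 < η) :
    ∃ L0 : ℕ, ∀ (V : Type) [Fintype V] [DecidableEq V] (f : V × V × V → ℝ), (∀ o, 0 ≤ f o) →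
      (∀ o, f o ≤ 1) → 0 < Fintype.card V →
      ∃ L ≤ L0, ∃ c : V → Fin L,
        (∑ t with Bad f c d ε t, ((cell c t).card : ℝ) ≤ η * (Fintype.card V : ℝ) ^ 3) := by
  obtain ⟨k, hk⟩ := exists_nat_gt (1 / (η * (d ^ 2 * ε ^ 3)))
  obtain ⟨L0, h⟩ := reg_iter d ε η hd hε k
  refine ⟨L0, fun V _ _ f h0 h1 hV => ?_⟩
  obtain ⟨L, hL, c, hc⟩ := h V f h0
  refine ⟨L, hL, c, hc.resolve_right fun h2 => ?_⟩
  have h3 := ener_le f (col3 c) h0 h1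
  have h4 : (Fintype.card (V × V × V) : ℝ) = (Fintype.card V : ℝ) ^ 3 := by
    simp only [Fintype.card_prod]; push_cast; ring
  rw [h4] at h3
  have hpos : (0:ℝ) < (Fintype.card V : ℝ) ^ 3 := by positivity
  rw [div_lt_iff₀ (by positivity)] at hk
  have := mul_lt_mul_of_pos_right hk hpos
  linarith

def ind {V : Type} [DecidableEq V] (H : Finset (Finset V)) (o : V × V × V) : ℝ :=
  if ({o.1, o.2.1, o.2.2} : Finset V) ∈ H then 1 else 0

lemma pick {V : Type} [DecidableEq V] (X Y F : Finset V) (P : Finset (V × V)) (hP : P ⊆ X ×ˢ Y)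
    (hF : F.card ≤ 8) (h : 8 * (X.card + Y.card) < P.card) : ∃ p ∈ P, p.1 ∉ F ∧ p.2 ∉ F := by
  by_contra hcon
  push Not at hcon
  have hsub : P ⊆ (F ×ˢ Y) ∪ (X ×ˢ F) := by
    intro p hp
    have h1 := Finset.mem_product.1 (hP hp)
    simp only [mem_union, mem_product]
    by_cases h2 : p.1 ∈ F
    · exact Or.inl ⟨h2, h1.2⟩
    · exact Or.inr ⟨h1.1, hcon p hp h2⟩
  have h1 := (Finset.card_le_card hsub).trans (Finset.card_union_le _ _)
  rw [Finset.card_product, Finset.card_product] at h1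
  have h2 : F.card * Y.card ≤ 8 * Y.card := Nat.mul_le_mul_right _ hF
  have h3 : X.card * F.card ≤ X.card * 8 := Nat.mul_le_mul_left _ hF
  omega

lemma triple_ne {V : Type} [DecidableEq V] {a b c : V} (h : ({a, b, c} : Finset V).card = 3) :
    a ≠ b ∧ a ≠ c ∧ b ≠ c := by
  refine ⟨?_, ?_, ?_⟩ <;> rintro rfl
  · simp at h
    have := Finset.card_le_two (a := a) (b := c)
    omega
  · have : ({a, b, a} : Finset V) = {a, b} := by ext; simp; tauto
    rw [this] at h
    have := Finset.card_le_two (a := a) (b := b)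
    omega
  · simp at h
    have := Finset.card_le_two (a := a) (b := b)
    omega

lemma find_pair {V : Type} [DecidableEq V] (H : Finset (Finset V)) (X Y Z : Finset V) (d : ℝ)
    (hd : 0 < d) (hX : 64 / d ^ 2 ≤ X.card) (hY : 64 / d ^ 2 ≤ Y.card) (hZ : 64 / d ^ 2 ≤ Z.card)
    (h : d * (X ×ˢ Y ×ˢ Z).card ≤ ∑ o ∈ X ×ˢ Y ×ˢ Z, ind H o) :
    ∃ z ∈ Z, ∃ z' ∈ Z, z ≠ z' ∧ d ^ 2 / 2 * (X.card * Y.card) ≤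
      ((X ×ˢ Y).filter fun p => ({p.1, p.2, z} : Finset V) ∈ H ∧ ({p.1, p.2, z'} : Finset V) ∈ H).card := by
  by_contra hcon
  push Not at hcon
  have hd2 : 0 < 64 / d ^ 2 := by positivity
  set a : V × V → V → ℝ := fun p z => ind H (p.1, p.2, z) with ha
  have ha0 : ∀ p z, a p z = 0 ∨ a p z = 1 := by
    intro p z; simp only [ha, ind]; split_ifs <;> simp
  have hsum : ∑ o ∈ X ×ˢ Y ×ˢ Z, ind H o = ∑ p ∈ X ×ˢ Y, ∑ z ∈ Z, a p z := by
    rw [Finset.sum_product, Finset.sum_product]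
    refine Finset.sum_congr rfl fun x _ => ?_
    rw [Finset.sum_product]
  rw [hsum] at h
  have hcs := sq_sum_le_card_mul_sum_sq (s := X ×ˢ Y) (f := fun p => ∑ z ∈ Z, a p z)
  have hsq : ∑ p ∈ X ×ˢ Y, (∑ z ∈ Z, a p z) ^ 2 =
      ∑ z ∈ Z, ∑ z' ∈ Z, ∑ p ∈ X ×ˢ Y, a p z * a p z' := by
    simp only [sq, Finset.sum_mul_sum]
    rw [Finset.sum_comm]
    refine Finset.sum_congr rfl fun z _ => ?_
    rw [Finset.sum_comm]
  have hle : ∑ z ∈ Z, ∑ z' ∈ Z, ∑ p ∈ X ×ˢ Y, a p z * a p z' ≤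
      ∑ z ∈ Z, ∑ z' ∈ Z, ((if z = z' then (X.card * Y.card : ℝ) else 0) + d ^ 2 / 2 * (X.card * Y.card)) := by
    refine Finset.sum_le_sum fun z hz => Finset.sum_le_sum fun z' hz' => ?_
    by_cases hzz : z = z'
    · rw [if_pos hzz]
      have : ∑ p ∈ X ×ˢ Y, a p z * a p z' ≤ ∑ p ∈ X ×ˢ Y, 1 := by
        refine Finset.sum_le_sum fun p _ => ?_
        rcases ha0 p z with h | h <;> rcases ha0 p z' with h' | h' <;> simp [h, h']
      simp only [Finset.sum_const, Finset.card_product, nsmul_eq_mul, mul_one] at this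
      push_cast at this
      have : 0 ≤ d ^ 2 / 2 * ((X.card : ℝ) * Y.card) := by positivity
      linarith
    · rw [if_neg hzz, zero_add]
      refine le_trans (le_of_eq ?_) (hcon z hz z' hz' hzz).le
      rw [Finset.card_filter]
      push_cast
      refine Finset.sum_congr rfl fun p _ => ?_
      simp only [ha, ind]
      split_ifs <;> simp_all
  have heq : ∑ z ∈ Z, ∑ z' ∈ Z, ((if z = z' then (X.card * Y.card : ℝ) else 0) + d ^ 2 / 2 * (X.card * Y.card))
      = Z.card * (X.card * Y.card) + Z.card * (Z.card * (d ^ 2 / 2 * (X.card * Y.card))) := by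
    simp only [Finset.sum_add_distrib, Finset.sum_const, nsmul_eq_mul, Finset.sum_ite_eq]
    congr 1
    rw [Finset.sum_ite_mem, Finset.inter_self, Finset.sum_const, nsmul_eq_mul]
  rw [← hsq, heq] at hle
  have hxp : (0:ℝ) < X.card := lt_of_lt_of_le hd2 hX
  have hyp : (0:ℝ) < Y.card := lt_of_lt_of_le hd2 hY
  have hzp : (0:ℝ) < Z.card := lt_of_lt_of_le hd2 hZ
  rw [div_le_iff₀ (by positivity)] at hZ
  simp only [Finset.card_product] at h hcs
  push_cast at h hcs
  generalize (X.card : ℝ) = x at *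
  generalize (Y.card : ℝ) = y at *
  generalize (Z.card : ℝ) = z at *
  have hlow : (d * (x * (y * z))) ^ 2 ≤ (∑ p ∈ X ×ˢ Y, ∑ z ∈ Z, a p z) ^ 2 :=
    pow_le_pow_left₀ (by positivity) h 2
  have h1 := (hlow.trans hcs).trans (mul_le_mul_of_nonneg_left hle (by positivity))
  have h2 : (x * y) ^ 2 * z * (d ^ 2 * z) ≤ (x * y) ^ 2 * z * (1 + z * d ^ 2 / 2) := by
    calc _ = (d * (x * (y * z))) ^ 2 := by ring
      _ ≤ _ := h1
      _ = _ := by ring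
  have h3 := le_of_mul_le_mul_left h2 (by positivity)
  linarith

lemma find_M {V : Type} [DecidableEq V] (H : Finset (Finset V)) (hH : ∀ e ∈ H, e.card = 3)
    (X Y Z : Finset V) (d : ℝ)
    (hd : 0 < d) (hX : 64 / d ^ 2 ≤ X.card) (hY : 64 / d ^ 2 ≤ Y.card) (hZ : 64 / d ^ 2 ≤ Z.card)
    (h : d * (X ×ˢ Y ×ˢ Z).card ≤ ∑ o ∈ X ×ˢ Y ×ˢ Z, ind H o) :
    ∃ g : Fin 8 → V, IsMCopy H g ∧ g 0 ∈ X ∧ g 1 ∈ Y ∧ g 2 ∈ Z ∧ g 3 ∈ X ∧ g 4 ∈ Y ∧ g 5 ∈ Z ∧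
      g 6 ∈ X ∧ g 7 ∈ Y := by
  obtain ⟨z, hz, z', hz', hne, hcard⟩ := find_pair H X Y Z d hd hX hY hZ h
  set P := (X ×ˢ Y).filter fun p => ({p.1, p.2, z} : Finset V) ∈ H ∧ ({p.1, p.2, z'} : Finset V) ∈ H with hP
  have hPsub : P ⊆ X ×ˢ Y := Finset.filter_subset _ _
  have hbig : 8 * (X.card + Y.card) < P.card := by
    have hd2 : 0 < 64 / d ^ 2 := by positivity
    have hxp : (0:ℝ) < X.card := lt_of_lt_of_le hd2 hX
    have hyp : (0:ℝ) < Y.card := lt_of_lt_of_le hd2 hY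
    rw [div_le_iff₀ (by positivity)] at hX hY
    have : (8 * ((X.card : ℝ) + Y.card)) < P.card := by
      refine lt_of_lt_of_le ?_ hcard
      nlinarith [mul_le_mul_of_nonneg_right hX hyp.le, mul_le_mul_of_nonneg_right hY hxp.le]
    exact_mod_cast this
  have hprop : ∀ p ∈ P, p.1 ∈ X ∧ p.2 ∈ Y ∧ ({p.1, p.2, z} : Finset V) ∈ H ∧
      ({p.1, p.2, z'} : Finset V) ∈ H ∧ p.1 ≠ p.2 := by
    intro p hp
    have h1 := Finset.mem_filter.1 hp
    have h2 := Finset.mem_product.1 h1.1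
    exact ⟨h2.1, h2.2, h1.2.1, h1.2.2, (triple_ne (hH _ h1.2.1)).1⟩
  obtain ⟨p, hp, hp1, hp2⟩ := pick X Y {z, z'} P hPsub (Finset.card_le_two.trans (by norm_num)) hbig
  obtain ⟨q, hq, hq1, hq2⟩ := pick X Y {z, z', p.1, p.2} P hPsub
    (Finset.card_le_four.trans (by norm_num)) hbig
  obtain ⟨r, hr, hr1, hr2⟩ := pick X Y {z, z', p.1, p.2, q.1, q.2} P hPsub
    (Finset.card_le_six.trans (by norm_num)) hbig
  obtain ⟨a1, a2, a3, a4, a5⟩ := hprop p hp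
  obtain ⟨b1, b2, b3, b4, b5⟩ := hprop q hq
  obtain ⟨c1, c2, c3, c4, c5⟩ := hprop r hr
  simp only [mem_insert, mem_singleton, not_or] at hp1 hp2 hq1 hq2 hr1 hr2
  refine ⟨![p.1, p.2, z, q.1, q.2, z', r.1, r.2], ⟨?_, ?_, ?_, ?_, ?_⟩, a1, a2, hz, b1, b2, hz', c1, c2⟩
  · rw [← List.nodup_ofFn]
    simp [List.ofFn_succ]
    grind
  · exact a3
  · have : ({z, q.1, q.2} : Finset V) = {q.1, q.2, z} := by ext; simp; tauto
    show ({z, q.1, q.2} : Finset V) ∈ H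
    rw [this]; exact b3
  · exact b4
  · have : ({z', r.1, r.2} : Finset V) = {r.1, r.2, z'} := by ext; simp; tauto
    show ({z', r.1, r.2} : Finset V) ∈ H
    rw [this]; exact c4

lemma embed {V ι : Type} [Fintype V] [DecidableEq V] [DecidableEq ι] (H : Finset (Finset V))
    (hH : ∀ e ∈ H, e.card = 3) (c : V → ι) (d ε : ℝ) (hd : 0 < d) (m : Multiset (ι × ι × ι))
    (hgood : ∀ t ∈ m, Good (ind H) c d ε t ∧ 64 / d ^ 2 ≤ ε * (part c t.1).card ∧
      64 / d ^ 2 ≤ ε * (part c t.2.1).card ∧ 64 / d ^ 2 ≤ ε * (part c t.2.2).card)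
    (hload : ∀ p, (((m.map fun t => tau t p).sum : ℕ) : ℝ) ≤ (1 - ε) * (part c p).card) :
    ∃ gs : Fin m.card → Fin 8 → V, (∀ i, IsMCopy H (gs i)) ∧
      (∀ i j, i ≠ j → ∀ a b, gs i a ≠ gs j b) ∧
      ∀ p, (((univ : Finset (Fin m.card)).biUnion fun i => univ.image (gs i)).filter
        fun v => c v = p).card ≤ (m.map fun t => tau t p).sum := by
  suffices hs : ∃ (q : ℕ) (gs : Fin q → Fin 8 → V), q = m.card ∧ (∀ i, IsMCopy H (gs i)) ∧
      (∀ i j, i ≠ j → ∀ a b, gs i a ≠ gs j b) ∧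
      ∀ p, (((univ : Finset (Fin q)).biUnion fun i => univ.image (gs i)).filter
        fun v => c v = p).card ≤ (m.map fun t => tau t p).sum by
    obtain ⟨q, gs, rfl, h⟩ := hs
    exact ⟨gs, h⟩
  induction m using Multiset.induction_on with
  | empty => exact ⟨0, Fin.elim0, by simp, fun i => i.elim0, fun i => i.elim0, by simp⟩
  | cons t m ih =>
    obtain ⟨q, gs, hq, h1, h2, h3⟩ := ih (fun t ht => hgood t (Multiset.mem_cons_of_mem ht))
      (fun p => le_trans (by simp) (hload p))
    obtain ⟨hg, s1, s2, s3⟩ := hgood t (Multiset.mem_cons_self t m)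
    set U := (univ : Finset (Fin q)).biUnion fun i => univ.image (gs i) with hU
    have hfree : ∀ p, ε * (part c p).card ≤ ((part c p \ U).card : ℝ) := by
      intro p
      have e1 : (part c p \ U).card + (U.filter fun v => c v = p).card = (part c p).card := by
        have : U.filter (fun v => c v = p) = part c p ∩ U := by
          ext v; simp [part, and_comm]
        rw [this, Finset.card_sdiff_add_card_inter]
      have e2 : (((U.filter fun v => c v = p).card : ℕ) : ℝ) ≤ (m.map fun t => tau t p).sum := by
        exact_mod_cast h3 p
      have e3 : (((m.map fun t => tau t p).sum : ℕ) : ℝ) ≤ (1 - ε) * (part c p).card :=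
        le_trans (by simp) (hload p)
      have e4 : ((part c p \ U).card : ℝ) + (U.filter fun v => c v = p).card = (part c p).card := by
        exact_mod_cast e1
      linarith
    obtain ⟨g, hgM, g0, g1, g2, g3, g4, g5, g6, g7⟩ := find_M H hH (part c t.1 \ U) (part c t.2.1 \ U)
      (part c t.2.2 \ U) d hd (s1.trans (hfree _)) (s2.trans (hfree _)) (s3.trans (hfree _))
      (hg _ Finset.sdiff_subset _ Finset.sdiff_subset _ Finset.sdiff_subset (hfree _) (hfree _) (hfree _))
    have hgU : ∀ a, g a ∉ U := by
      intro a
      fin_cases a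
      exacts [(mem_sdiff.1 g0).2, (mem_sdiff.1 g1).2, (mem_sdiff.1 g2).2, (mem_sdiff.1 g3).2,
        (mem_sdiff.1 g4).2, (mem_sdiff.1 g5).2, (mem_sdiff.1 g6).2, (mem_sdiff.1 g7).2]
    have hgU' : ∀ a i b, g a ≠ gs i b := by
      intro a i b hab
      apply hgU a
      rw [hab, hU]
      simp only [mem_biUnion, mem_univ, true_and, mem_image]
      exact ⟨i, b, rfl⟩
    refine ⟨q + 1, Fin.cons g gs, by simp [hq], ?_, ?_, ?_⟩
    · intro i
      refine Fin.cases ?_ (fun i => ?_) i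
      · exact hgM
      · exact h1 i
    · intro i j
      refine Fin.cases ?_ (fun i => ?_) i <;> refine Fin.cases ?_ (fun j => ?_) j
      · intro h; exact absurd rfl h
      · intro _ a b; exact hgU' a j b
      · intro _ a b; exact (hgU' b i a).symm
      · intro h a b
        exact h2 i j (fun h' => h (by rw [h'])) a b
    · intro p
      have e1 : ((univ : Finset (Fin (q + 1))).biUnion fun i => univ.image ((Fin.cons g gs : Fin (q+1) → Fin 8 → V) i))
          = univ.image g ∪ U := by
        ext v
        simp only [mem_biUnion, mem_univ, true_and, mem_union, Fin.exists_fin_succ, Fin.cons_zero, Fin.cons_succ, hU]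
      rw [e1, Finset.filter_union, Multiset.map_cons, Multiset.sum_cons]
      refine (Finset.card_union_le _ _).trans (Nat.add_le_add ?_ (h3 p))
      rw [Finset.filter_image]
      refine Finset.card_image_le.trans ?_
      have k : ∀ {v i}, v ∈ part c i \ U → c v = i := fun h => (mem_filter.1 (mem_sdiff.1 h).1).2
      rw [Finset.card_filter, Fin.sum_univ_eight, k g0, k g1, k g2, k g3, k g4, k g5, k g6, k g7, tau]
      omega

lemma Good_symm {V ι : Type} [Fintype V] [DecidableEq V] [DecidableEq ι] (H : Finset (Finset V))
    (c : V → ι) (d ε : ℝ) (i j k : ι) (h : Good (ind H) c d ε (i, j, k)) :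
    Good (ind H) c d ε (i, k, j) := by
  intro X hX Y hY Z hZ h1 h2 h3
  have := h X hX Z hZ Y hY h1 h3 h2
  have e : ∑ o ∈ X ×ˢ Y ×ˢ Z, ind H o = ∑ o ∈ X ×ˢ Z ×ˢ Y, ind H o := by
    rw [Finset.sum_product, Finset.sum_product]
    refine Finset.sum_congr rfl fun x _ => ?_
    rw [Finset.sum_product, Finset.sum_product, Finset.sum_comm]
    refine Finset.sum_congr rfl fun z _ => Finset.sum_congr rfl fun y _ => ?_
    have : ({x, y, z} : Finset V) = {x, z, y} := by ext; simp; tauto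
    simp only [ind, this]
  rw [e]
  simp only [Finset.card_product] at this ⊢
  rw [mul_comm Y.card]; exact this

lemma deg_sum {V : Type} [Fintype V] [DecidableEq V] (H : Finset (Finset V))
    (hH : ∀ e ∈ H, e.card = 3) (v : V) :
    2 * ((H.filter (fun e => v ∈ e)).card : ℝ) ≤ ∑ p : V × V, ind H (v, p) := by
  have e1 : ∑ p : V × V, ind H (v, p) =
      ((univ.filter fun p : V × V => ({v, p.1, p.2} : Finset V) ∈ H).card : ℝ) := by
    rw [Finset.card_filter]; push_cast; rfl
  rw [e1]
  have hm : ∀ p ∈ (univ.filter fun p : V × V => ({v, p.1, p.2} : Finset V) ∈ H),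
      ({v, p.1, p.2} : Finset V) ∈ H.filter (fun e => v ∈ e) := by
    intro p hp
    rw [Finset.mem_filter] at hp ⊢
    exact ⟨hp.2, by simp⟩
  have e2 := Finset.card_eq_sum_card_fiberwise hm
  rw [e2]
  have : ∑ e ∈ H.filter (fun e => v ∈ e), 2 ≤ ∑ e ∈ H.filter (fun e => v ∈ e),
      ((univ.filter fun p : V × V => ({v, p.1, p.2} : Finset V) ∈ H).filter
        fun p => ({v, p.1, p.2} : Finset V) = e).card := by
    refine Finset.sum_le_sum fun e he => ?_
    obtain ⟨he, hv⟩ := Finset.mem_filter.1 he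
    have h2 : (e.erase v).card = 2 := by rw [Finset.card_erase_of_mem hv, hH e he]
    obtain ⟨a, b, hab, hE⟩ := Finset.card_eq_two.1 h2
    have hee : e = {v, a, b} := by rw [← Finset.insert_erase hv, hE]
    have hee' : e = {v, b, a} := by rw [hee]; ext; simp; tauto
    have : ({(a, b), (b, a)} : Finset (V × V)).card = 2 := by
      rw [Finset.card_pair]; intro h; exact hab (Prod.mk.inj h).1
    rw [← this]
    apply Finset.card_le_card
    intro p hp
    simp only [mem_insert, mem_singleton] at hp
    rcases hp with rfl | rfl
    · simp only [mem_filter, mem_univ, true_and]; rw [← hee]; exact ⟨he, rfl⟩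
    · simp only [mem_filter, mem_univ, true_and]; rw [← hee']; exact ⟨he, rfl⟩
  rw [Finset.sum_const, smul_eq_mul] at this
  rw [mul_comm]
  exact_mod_cast this

lemma sum_color {V ι : Type} [Fintype V] [Fintype ι] [DecidableEq ι] (c : V → ι) (F : ι → ℝ) :
    ∑ v, F (c v) = ∑ j, ((part c j).card : ℝ) * F j := by
  rw [← Finset.sum_fiberwise univ c]
  refine Finset.sum_congr rfl fun j _ => ?_
  rw [← nsmul_eq_mul, ← Finset.sum_const]
  exact Finset.sum_congr rfl fun v hv => by rw [(Finset.mem_filter.1 hv).2]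

lemma mult_sum {T : Type} [DecidableEq T] (A : Finset T) (q f : T → ℕ) :
    ((∑ t ∈ A, q t • ({t} : Multiset T)).map f).sum = ∑ t ∈ A, q t * f t := by
  induction A using Finset.induction_on with
  | empty => simp
  | insert a A ha ih =>
    rw [Finset.sum_insert ha, Finset.sum_insert ha, Multiset.map_add, Multiset.sum_add, ih,
      Multiset.map_nsmul, Multiset.sum_nsmul]
    simp

/-- combining LP and embedding -/
lemma combine {V ι : Type} [Fintype V] [DecidableEq V] [Fintype ι] [DecidableEq ι] (H : Finset (Finset V))
    (hH : ∀ e ∈ H, e.card = 3) (c : V → ι) (d ε : ℝ) (hd : 0 < d) (hε : 0 < ε) (hε1 : ε < 1)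
    (w : ι × ι × ι → ℝ) (hw : ∀ t, 0 ≤ w t)
    (hgood : ∀ t, w t ≠ 0 → Good (ind H) c d ε t ∧ 64 / d ^ 2 ≤ ε * (part c t.1).card ∧
      64 / d ^ 2 ≤ ε * (part c t.2.1).card ∧ 64 / d ^ 2 ≤ ε * (part c t.2.2).card)
    (hload : ∀ p, ∑ t, w t * tau t p ≤ (part c p).card) :
    ∃ (q : ℕ) (gs : Fin q → Fin 8 → V),
        (∀ i, IsMCopy H (gs i)) ∧
        (∀ i j, i ≠ j → ∀ a b, gs i a ≠ gs j b) ∧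
        (((Finset.univ \ Finset.univ.biUnion fun i => Finset.univ.image (gs i)).card : ℝ)
          ≤ Fintype.card V - (1 - ε) * (8 * ∑ t, w t) + 8 * (Fintype.card ι : ℝ) ^ 3) := by
  set Q : ι × ι × ι → ℕ := fun t => ⌊(1 - ε) * w t⌋₊ with hQ
  set m : Multiset (ι × ι × ι) := ∑ t, Q t • ({t} : Multiset (ι × ι × ι)) with hm
  have hε' : 0 < 1 - ε := by linarith
  have hQle : ∀ t, (Q t : ℝ) ≤ (1 - ε) * w t := fun t =>
    Nat.floor_le (mul_nonneg hε'.le (hw t))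
  have hcard : m.card = ∑ t, Q t := by
    simp [hm]
  obtain ⟨gs, h1, h2, -⟩ := embed H hH c d ε hd m
    (by
      intro t ht
      apply hgood
      intro h0
      rw [hm, Multiset.mem_sum] at ht
      obtain ⟨t', -, ht'⟩ := ht
      have h3 : t = t' := by
        have := Multiset.mem_of_mem_nsmul ht'
        simpa using this
      subst h3
      have : Q t = 0 := by simp [hQ, h0]
      rw [this] at ht'
      simp at ht')
    (by
      intro p
      rw [hm, mult_sum]
      push_cast
      calc ∑ t, (Q t : ℝ) * tau t p ≤ ∑ t, (1 - ε) * (w t * tau t p) := by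
            refine Finset.sum_le_sum fun t _ => ?_
            rw [← mul_assoc]
            exact mul_le_mul_of_nonneg_right (hQle t) (by positivity)
        _ = (1 - ε) * ∑ t, w t * tau t p := by rw [Finset.mul_sum]
        _ ≤ _ := mul_le_mul_of_nonneg_left (hload p) hε'.le)
  refine ⟨m.card, gs, h1, h2, ?_⟩
  have hU : (univ.biUnion fun i => univ.image (gs i)).card = m.card * 8 := by
    rw [Finset.card_biUnion]
    · simp [Finset.card_image_of_injective _ (h1 _).1]
    · intro i _ j _ hij
      refine Finset.disjoint_left.2 ?_
      intro v hv hv'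
      simp only [mem_image, mem_univ, true_and] at hv hv'
      obtain ⟨a, ha⟩ := hv
      obtain ⟨b, hb⟩ := hv'
      exact h2 i j hij a b (ha.trans hb.symm)
  have hU2 := Finset.card_sdiff_add_card_eq_card
    (Finset.subset_univ (univ.biUnion fun i => univ.image (gs i)))
  rw [hU, Finset.card_univ] at hU2
  have hU3 : ((univ \ univ.biUnion fun i => univ.image (gs i)).card : ℝ) + m.card * 8 = Fintype.card V := by
    exact_mod_cast hU2
  have hlow : (1 - ε) * ∑ t, w t - (Fintype.card ι : ℝ) ^ 3 ≤ m.card := by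
    rw [hcard]
    push_cast
    have : (Fintype.card ι : ℝ) ^ 3 = ∑ t : ι × ι × ι, (1:ℝ) := by
      simp; ring
    rw [this, Finset.mul_sum, ← Finset.sum_sub_distrib]
    refine Finset.sum_le_sum fun t _ => ?_
    have := Nat.lt_floor_add_one ((1 - ε) * w t)
    simp only [hQ]; linarith
  linarith

/-- loss through non-good cells -/
lemma loss {V ι : Type} [Fintype V] [DecidableEq V] [Fintype ι] [DecidableEq ι] (f : V × V × V → ℝ)
    (h0 : ∀ o, 0 ≤ f o) (h1 : ∀ o, f o ≤ 1) (c : V → ι) (d ε η : ℝ) (hd : 0 < d)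
    [DecidablePred (Good f c d ε)] [DecidablePred (Bad f c d ε)]
    (hbad : ∑ t with Bad f c d ε t, ((cell c t).card : ℝ) ≤ η * (Fintype.card V : ℝ) ^ 3) :
    ∑ x, ∑ p : V × V, (if Good f c d ε (c x, c p.1, c p.2) then 0 else f (x, p)) ≤
      (2 * d + η) * (Fintype.card V : ℝ) ^ 3 := by
  have e1 : ∑ x, ∑ p : V × V, (if Good f c d ε (c x, c p.1, c p.2) then 0 else f (x, p)) =
      ∑ o : V × V × V, if Good f c d ε (col3 c o) then 0 else f o := by
    rw [Fintype.sum_prod_type]; rfl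
  rw [e1, ← Finset.sum_fiberwise univ (col3 c)]
  have hvol : ∑ t, ((cell c t).card : ℝ) = (Fintype.card V : ℝ) ^ 3 := by
    have h4 : (Fintype.card (V × V × V) : ℝ) = (Fintype.card V : ℝ) ^ 3 := by
      simp only [Fintype.card_prod]; push_cast; ring
    rw [← h4, ← Finset.card_univ, Finset.card_eq_sum_card_fiberwise (f := col3 c) (t := univ) (by simp)]
    push_cast
    refine Finset.sum_congr rfl fun t _ => by rw [cell_eq]
  calc _ ≤ ∑ t, (2 * d * ((cell c t).card : ℝ) + if Bad f c d ε t then ((cell c t).card : ℝ) else 0) := by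
        refine Finset.sum_le_sum fun t _ => ?_
        have e2 : ∑ o with col3 c o = t, (if Good f c d ε (col3 c o) then 0 else f o) =
            if Good f c d ε t then 0 else ∑ o ∈ cell c t, f o := by
          rw [← cell_eq]
          split_ifs with h
          · refine Finset.sum_eq_zero fun o ho => ?_
            rw [(Finset.mem_filter.1 ho).2, if_pos h]
          · refine Finset.sum_congr rfl fun o ho => ?_
            rw [(Finset.mem_filter.1 ho).2, if_neg h]
        rw [e2]
        have hc : (0:ℝ) ≤ (cell c t).card := by positivity
        have hdc : 0 ≤ 2 * d * ((cell c t).card : ℝ) := by positivity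
        by_cases hg : Good f c d ε t
        · rw [if_pos hg]; split_ifs <;> linarith
        · rw [if_neg hg]
          by_cases hb : Bad f c d ε t
          · rw [if_pos hb]
            have : ∑ o ∈ cell c t, f o ≤ ∑ o ∈ cell c t, (1:ℝ) := Finset.sum_le_sum fun o _ => h1 o
            simp at this
            linarith
          · rw [if_neg hb]
            have : ¬ (2 * d * (cell c t).card ≤ ∑ o ∈ cell c t, f o) := fun h => hb ⟨h, hg⟩
            linarith
    _ = 2 * d * (Fintype.card V : ℝ) ^ 3 + ∑ t with Bad f c d ε t, ((cell c t).card : ℝ) := by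
        rw [Finset.sum_add_distrib, ← Finset.mul_sum, hvol, Finset.sum_filter]
    _ ≤ _ := by linarith

set_option maxHeartbeats 2000000 in
open Classical in
lemma main_aux {V ι : Type} [Fintype V] [DecidableEq V] [Fintype ι] [DecidableEq ι]
    (H : Finset (Finset V)) (hH : ∀ e ∈ H, e.card = 3) (c : V → ι) (n γ μ d N1 : ℝ)
    (hn : (Fintype.card V : ℝ) = n) (hnpos : 0 < n)
    (hμ : 0 < μ) (hμ1 : μ ≤ 1 / 32) (hμγ : 32 * μ ≤ γ) (hd : 0 < d)
    (hN1 : 64 / d ^ 2 ≤ μ * N1)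
    (hdeg : ∀ v, (7 / 16 + γ / 2) * n ^ 2 ≤ ∑ p : V × V, ind H (v, p))
    (hloss : ∑ x, ∑ p : V × V, (if Good (ind H) c d μ (c x, c p.1, c p.2) then 0 else ind H (x, p)) ≤
      μ ^ 2 * n ^ 3)
    (hsmall : (Fintype.card ι : ℝ) * N1 ≤ μ * n) :
    ∃ w : ι × ι × ι → ℝ, (∀ t, 0 ≤ w t) ∧
      (∀ t, w t ≠ 0 → Good (ind H) c d μ t ∧ 64 / d ^ 2 ≤ μ * (part c t.1).card ∧
      64 / d ^ 2 ≤ μ * (part c t.2.1).card ∧ 64 / d ^ 2 ≤ μ * (part c t.2.2).card) ∧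
      (∀ p, ∑ t, w t * tau t p ≤ (part c p).card) ∧ (1 - 2 * μ) * n ≤ 8 * ∑ t, w t := by
  have hind0 : ∀ o, 0 ≤ ind H o := by intro o; simp only [ind]; split_ifs <;> norm_num
  have hind1 : ∀ o, ind H o ≤ 1 := by intro o; simp only [ind]; split_ifs <;> norm_num
  set ℓ : V → ℝ := fun x => ∑ p : V × V,
    (if Good (ind H) c d μ (c x, c p.1, c p.2) then 0 else ind H (x, p)) with hℓ
  have hℓ0 : ∀ x, 0 ≤ ℓ x := fun x => Finset.sum_nonneg fun p _ => by
    split_ifs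
    · exact le_rfl
    · exact hind0 _
  set G : Finset ι := univ.filter fun i => N1 ≤ (part c i).card ∧ ∃ x, c x = i ∧ ℓ x ≤ μ * n ^ 2 with hG
  -- few vertices outside
  set U : Finset V := univ.filter fun x => c x ∉ G with hU
  have hUcard : (U.card : ℝ) ≤ 2 * μ * n := by
    have hsub : U ⊆ (univ.filter fun x => ((part c (c x)).card : ℝ) < N1) ∪
        (univ.filter fun x => μ * n ^ 2 < ℓ x) := by
      intro x hx
      have hx := (Finset.mem_filter.1 hx).2
      simp only [mem_union, mem_filter, mem_univ, true_and]
      by_contra hcon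
      push Not at hcon
      apply hx
      simp only [hG, mem_filter, mem_univ, true_and]
      exact ⟨hcon.1, x, rfl, hcon.2⟩
    have h1 : (U.card : ℝ) ≤ ((univ.filter fun x => ((part c (c x)).card : ℝ) < N1).card : ℝ) +
        ((univ.filter fun x => μ * n ^ 2 < ℓ x).card : ℝ) := by
      exact_mod_cast (Finset.card_le_card hsub).trans (Finset.card_union_le _ _)
    have h2 : ((univ.filter fun x => ((part c (c x)).card : ℝ) < N1).card : ℝ) ≤ μ * n := by
      refine le_trans ?_ hsmall
      rw [Finset.card_filter]
      push_cast
      rw [sum_color c (fun i => if ((part c i).card : ℝ) < N1 then (1:ℝ) else 0)]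
      have : (Fintype.card ι : ℝ) * N1 = ∑ i : ι, N1 := by simp
      rw [this]
      refine Finset.sum_le_sum fun i _ => ?_
      have hN1pos : 0 < N1 := by
        have : 0 < μ * N1 := lt_of_lt_of_le (by positivity) hN1
        exact pos_of_mul_pos_right this hμ.le
      split_ifs with h
      · linarith
      · simp; exact hN1pos.le
    have h3 : ((univ.filter fun x => μ * n ^ 2 < ℓ x).card : ℝ) ≤ μ * n := by
      have : ((univ.filter fun x => μ * n ^ 2 < ℓ x).card : ℝ) * (μ * n ^ 2) ≤ μ ^ 2 * n ^ 3 := by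
        refine le_trans ?_ hloss
        rw [← nsmul_eq_mul, ← Finset.sum_const]
        refine (Finset.sum_le_sum (g := ℓ) fun x hx => (Finset.mem_filter.1 hx).2.le).trans ?_
        exact Finset.sum_le_sum_of_subset_of_nonneg (Finset.subset_univ _) fun x _ _ => hℓ0 x
      have hp : 0 < μ * n ^ 2 := by positivity
      refine le_of_mul_le_mul_right (this.trans (le_of_eq ?_)) hp
      ring
    linarith
  set s : ι → ℝ := fun i => if i ∈ G then ((part c i).card : ℝ) else 0 with hs
  have hs0 : ∀ i, 0 ≤ s i := by intro i; simp only [hs]; split_ifs <;> positivity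
  have hsG : ∀ i ∉ G, s i = 0 := by intro i hi; simp [hs, hi]
  have hsum : ∑ i ∈ G, s i = ∑ i, s i :=
    Finset.sum_subset (Finset.subset_univ _) fun i _ hi => hsG i hi
  have hSU : ∑ i ∈ G, s i + U.card = n := by
    have e1 : ∑ i, s i = ∑ v, (if c v ∈ G then (1:ℝ) else 0) := by
      rw [sum_color c (fun i => if i ∈ G then (1:ℝ) else 0)]
      refine Finset.sum_congr rfl fun i _ => ?_
      simp [hs]
    have e2 : (U.card : ℝ) = ∑ v, (if c v ∈ G then (0:ℝ) else 1) := by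
      rw [hU, Finset.card_filter]; push_cast
      refine Finset.sum_congr rfl fun v _ => ?_
      by_cases h : c v ∈ G <;> simp [h]
    rw [hsum, e1, e2, ← Finset.sum_add_distrib, ← hn]
    have : ∀ v, ((if c v ∈ G then (1:ℝ) else 0) + if c v ∈ G then (0:ℝ) else 1) = 1 := by
      intro v; split_ifs <;> norm_num
    simp [this]
  have hU0 : (0:ℝ) ≤ U.card := by positivity
  have hSpos : 0 < ∑ i ∈ G, s i := by nlinarith
  obtain ⟨w, hw0, hwR, hwl⟩ := lp_lemma G s hs0 hsG hSpos
    (fun t => Good (ind H) c d μ t ∧ t.1 ∈ G ∧ t.2.1 ∈ G ∧ t.2.2 ∈ G)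
    (fun i j k h => ⟨Good_symm H c d μ i j k h.1, h.2.1, h.2.2.2, h.2.2.1⟩)
    (by
      intro i hi
      obtain ⟨-, x, hx, hℓx⟩ := (Finset.mem_filter.1 hi).2
      have e1 : ∑ j ∈ G, ∑ k ∈ G, (if Good (ind H) c d μ (i, j, k) ∧ i ∈ G ∧ j ∈ G ∧ k ∈ G
          then s j * s k else 0) = ∑ p : V × V,
            if Good (ind H) c d μ (i, c p.1, c p.2) ∧ c p.1 ∈ G ∧ c p.2 ∈ G then (1:ℝ) else 0 := by
        rw [Fintype.sum_prod_type]
        simp only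
        have a1 : ∀ v : V, ∑ u : V, (if Good (ind H) c d μ (i, c v, c u) ∧ c v ∈ G ∧ c u ∈ G then (1:ℝ) else 0)
            = ∑ k, ((part c k).card : ℝ) *
              (if Good (ind H) c d μ (i, c v, k) ∧ c v ∈ G ∧ k ∈ G then (1:ℝ) else 0) := fun v =>
          sum_color c (fun k => if Good (ind H) c d μ (i, c v, k) ∧ c v ∈ G ∧ k ∈ G then (1:ℝ) else 0)
        simp only [a1]
        rw [sum_color c (fun j => ∑ k, ((part c k).card : ℝ) *
              (if Good (ind H) c d μ (i, j, k) ∧ j ∈ G ∧ k ∈ G then (1:ℝ) else 0))]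
        rw [Finset.sum_subset (Finset.subset_univ G)]
        · refine Finset.sum_congr rfl fun j _ => ?_
          rw [Finset.sum_subset (Finset.subset_univ G), Finset.mul_sum]
          · refine Finset.sum_congr rfl fun k _ => ?_
            by_cases hj : j ∈ G <;> by_cases hk : k ∈ G <;> simp [hi, hj, hk, hs]
          · intro k _ hk; simp [hk]
        · intro j _ hj; simp [hj]
      show _ < ∑ j ∈ G, ∑ k ∈ G, (if Good (ind H) c d μ (i, j, k) ∧ i ∈ G ∧ j ∈ G ∧ k ∈ G
          then s j * s k else 0)
      rw [e1]
      have e2 : ∑ p : V × V, ind H (x, p) ≤ (∑ p : V × V,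
            if Good (ind H) c d μ (i, c p.1, c p.2) ∧ c p.1 ∈ G ∧ c p.2 ∈ G then (1:ℝ) else 0)
            + ℓ x + (∑ p : V × V, if c p.1 ∈ G then (0:ℝ) else 1) +
            (∑ p : V × V, if c p.2 ∈ G then (0:ℝ) else 1) := by
        simp only [hℓ, hx]
        rw [← Finset.sum_add_distrib, ← Finset.sum_add_distrib, ← Finset.sum_add_distrib]
        refine Finset.sum_le_sum fun p _ => ?_
        have b0 := hind0 (x, p)
        have b1 := hind1 (x, p)
        by_cases hg : Good (ind H) c d μ (i, c p.1, c p.2) <;> by_cases h1 : c p.1 ∈ G <;>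
          by_cases h2 : c p.2 ∈ G <;> simp [hg, h1, h2] <;> linarith
      have e3 : (U.card : ℝ) = ∑ v, (if c v ∈ G then (0:ℝ) else 1) := by
        rw [hU, Finset.card_filter]; push_cast
        refine Finset.sum_congr rfl fun v _ => ?_
        by_cases h : c v ∈ G <;> simp [h]
      have e4 : (∑ p : V × V, if c p.1 ∈ G then (0:ℝ) else 1) = U.card * n := by
        rw [Fintype.sum_prod_type, e3, Finset.sum_mul]
        refine Finset.sum_congr rfl fun v _ => ?_
        by_cases h : c v ∈ G <;> simp [h, hn]
      have e5 : (∑ p : V × V, if c p.2 ∈ G then (0:ℝ) else 1) = U.card * n := by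
        rw [Fintype.sum_prod_type, Finset.sum_comm, e3, Finset.sum_mul]
        refine Finset.sum_congr rfl fun v _ => ?_
        by_cases h : c v ∈ G <;> simp [h, hn]
      rw [e4, e5] at e2
      have e6 := hdeg x
      have e7 : (∑ i ∈ G, s i) ^ 2 ≤ n ^ 2 := pow_le_pow_left₀ hSpos.le (by linarith) 2
      have e8 : (U.card : ℝ) * n ≤ 2 * μ * n * n := mul_le_mul_of_nonneg_right hUcard hnpos.le
      have e9 : 0 < n ^ 2 := by positivity
      have e10 : 32 * μ * n ^ 2 ≤ γ * n ^ 2 := mul_le_mul_of_nonneg_right hμγ e9.le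
      have e11 : 0 < μ * n ^ 2 := by positivity
      nlinarith)
  refine ⟨w, hw0, ?_, ?_, ?_⟩
  · intro t ht
    obtain ⟨h1, h2, h3, h4⟩ := hwR t ht
    have hb : ∀ i ∈ G, 64 / d ^ 2 ≤ μ * (part c i).card := fun i hi =>
      hN1.trans (mul_le_mul_of_nonneg_left (Finset.mem_filter.1 hi).2.1 hμ.le)
    exact ⟨h1, hb _ h2, hb _ h3, hb _ h4⟩
  · intro p
    rw [hwl p]
    simp only [hs]
    split_ifs
    · exact le_rfl
    · positivity
  · have : 8 * ∑ t, w t = ∑ i ∈ G, s i := by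
      rw [hsum]
      simp only [← hwl]
      rw [Finset.sum_comm, Finset.mul_sum]
      refine Finset.sum_congr rfl fun t _ => ?_
      rw [← Finset.mul_sum]
      have := tau_sum t (fun _ => 1)
      simp only [mul_one] at this
      rw [this]; ring
    rw [this]; linarith

theorem M_tiling_lemma (γ α : ℝ) (hγ : 0 < γ) (hα : 0 < α) :
    ∃ n₀ : ℕ, ∀ (V : Type) [Fintype V] [DecidableEq V], ∀ (H : Finset (Finset V)) (n : ℕ),
      Fintype.card V = n → n₀ < n →
      (∀ e ∈ H, e.card = 3) →
      (∀ v : V, (7 / 16 + γ) * (n.choose 2 : ℝ) ≤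
        ((H.filter (fun e => v ∈ e)).card : ℝ)) →
      ∃ (q : ℕ) (gs : Fin q → Fin 8 → V),
        (∀ i, IsMCopy H (gs i)) ∧
        (∀ i j, i ≠ j → ∀ a b, gs i a ≠ gs j b) ∧
        (((Finset.univ \ Finset.univ.biUnion fun i => Finset.univ.image (gs i)).card : ℝ)
          ≤ α * n) := by
  classical
  set μ : ℝ := min (min α γ) 1 / 32 with hμdef
  have hμ : 0 < μ := by rw [hμdef]; positivity
  have hm1 : min (min α γ) 1 ≤ 1 := min_le_right _ _
  have hm2 : min (min α γ) 1 ≤ γ := (min_le_left _ _).trans (min_le_right _ _)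
  have hm3 : min (min α γ) 1 ≤ α := (min_le_left _ _).trans (min_le_left _ _)
  have hμ1 : μ ≤ 1 / 32 := by rw [hμdef]; linarith
  have hμγ : 32 * μ ≤ γ := by rw [hμdef]; linarith
  have hμα : 32 * μ ≤ α := by rw [hμdef]; linarith
  clear_value μ
  set d : ℝ := μ ^ 2 / 4 with hd
  have hdpos : 0 < d := by positivity
  set N1 : ℝ := 64 / d ^ 2 / μ with hN1
  have hN1pos : 0 < N1 := by positivity
  obtain ⟨L0, hreg⟩ := regularity d μ (μ ^ 2 / 2) hdpos hμ (by positivity)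
  obtain ⟨n₀, hn₀⟩ := exists_nat_gt ((7 / 16 + γ) / (γ / 2) + (L0 * N1) / μ + (8 * (L0:ℝ) ^ 3) / μ)
  refine ⟨n₀, ?_⟩
  intro V _ _ H n hcard hn hH hdeg
  have hnR : ((7 / 16 + γ) / (γ / 2) + (L0 * N1) / μ + (8 * (L0:ℝ) ^ 3) / μ) < n :=
    hn₀.trans (by exact_mod_cast hn)
  have t1 : 0 ≤ (7 / 16 + γ) / (γ / 2) := by positivity
  have t2 : 0 ≤ (L0 * N1) / μ := by positivity
  have t3 : 0 ≤ (8 * (L0:ℝ) ^ 3) / μ := by positivity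
  have k1 : (7 / 16 + γ) / (γ / 2) ≤ n := by linarith
  have k2 : (L0 * N1) / μ ≤ n := by linarith
  have k3 : (8 * (L0:ℝ) ^ 3) / μ ≤ n := by linarith
  rw [div_le_iff₀ (by positivity)] at k1 k2 k3
  have hnpos : (0:ℝ) < n := by linarith
  have hind0 : ∀ o : V × V × V, 0 ≤ ind H o := by intro o; simp only [ind]; split_ifs <;> norm_num
  have hind1 : ∀ o : V × V × V, ind H o ≤ 1 := by intro o; simp only [ind]; split_ifs <;> norm_num
  obtain ⟨L, hL, c, hc⟩ := hreg V (ind H) hind0 hind1 (by rw [hcard]; exact_mod_cast hnpos)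
  have hloss := loss (ind H) hind0 hind1 c d μ (μ ^ 2 / 2) hdpos hc
  have hLR : (L:ℝ) ≤ L0 := by exact_mod_cast hL
  obtain ⟨w, hw0, hwg, hwl, hws⟩ := main_aux H hH c n γ μ d N1 (by rw [hcard]) hnpos hμ hμ1 hμγ hdpos
    (by rw [hN1]; field_simp; exact le_rfl)
    (by
      intro v
      refine le_trans ?_ (deg_sum H hH v)
      have h1 := hdeg v
      rw [Nat.cast_choose_two] at h1
      nlinarith [mul_le_mul_of_nonneg_right k1 hnpos.le])
    (by
      rw [hcard] at hloss
      refine le_trans (le_of_eq ?_) (hloss.trans (le_of_eq ?_))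
      · rfl
      · rw [hd]; ring)
    (by
      rw [Fintype.card_fin]
      have := mul_le_mul_of_nonneg_right hLR hN1pos.le
      linarith)
  obtain ⟨q, gs, g1, g2, g3⟩ := combine H hH c d μ hdpos hμ (by linarith) w hw0 hwg hwl
  refine ⟨q, gs, g1, g2, g3.trans ?_⟩
  rw [hcard, Fintype.card_fin]
  have h5 : (L:ℝ) ^ 3 ≤ (L0:ℝ) ^ 3 := pow_le_pow_left₀ (by positivity) hLR 3
  have h6 := mul_le_mul_of_nonneg_left hws (show 0 ≤ 1 - μ by linarith)
  have h7 := mul_le_mul_of_nonneg_right hμα hnpos.le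
  have h8 : 0 < μ * n := by positivity
  have h9 : 0 < μ * μ * n := by positivity
  nlinarith
end

section
/- Suppose H is a 3-partite 3-uniform hypergraph on m vertices with partition classes V₁, V₂, V₃ (every edge has one vertex in each class) with at least dm³ edges, where 2dm > 10. Then for each i ∈ {1,2,3} there is a copy of M in H which intersects V_i in exactly two vertices and each of the other two partition classes in exactly three vertices. -/
open Finset

theorem avoid_aux {V : Type} [Fintype V] [DecidableEq V] (F : Finset (V × V)) (A B : Finset V)
    (hA : A.card ≤ 2) (hB : B.card ≤ 2) (hF : 4 * Fintype.card V < F.card) :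
    ∃ p ∈ F, p.1 ∉ A ∧ p.2 ∉ B := by
  by_contra hcon
  push Not at hcon
  have hsub : F ⊆ A ×ˢ univ ∪ univ ×ˢ B := by
    intro p hp
    have := hcon p hp
    simp only [mem_union, mem_product, mem_univ, and_true, true_and]
    tauto
  have h1 := (card_le_card hsub).trans (card_union_le _ _)
  rw [card_product, card_product, card_univ] at h1
  nlinarith

theorem triples_aux {V : Type} [Fintype V] [DecidableEq V] (T : Finset (V × V × V))
    (hT : 5 * Fintype.card V ^ 2 < T.card) :
    ∃ x y a b a1 b1 a2 b2 : V, x ≠ y ∧ a1 ≠ a ∧ b1 ≠ b ∧ a2 ≠ a ∧ a2 ≠ a1 ∧ b2 ≠ b ∧ b2 ≠ b1 ∧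
      (x, a, b) ∈ T ∧ (y, a, b) ∈ T ∧ (x, a1, b1) ∈ T ∧ (y, a2, b2) ∈ T := by
  classical
  let D : V → Finset (V × V) := fun x => univ.filter (fun p => (x, p) ∈ T)
  have hlight : (T.filter (fun t => ¬ 4 * Fintype.card V < (D t.1).card)).card
      ≤ 4 * Fintype.card V * Fintype.card V := by
    rw [← card_univ (α := V)]
    refine card_le_mul_card_image_of_maps_to (f := fun t : V × V × V => t.1)
      (fun _ _ => mem_univ _) _ ?_
    intro x _
    by_cases hx : 4 * Fintype.card V < (D x).card
    · rw [card_eq_zero.2]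
      · exact Nat.zero_le _
      · ext t
        simp only [mem_filter, notMem_empty, iff_false]
        rintro ⟨⟨_, h⟩, rfl⟩
        exact h hx
    · refine le_trans ?_ (not_lt.1 hx)
      refine card_le_card_of_injOn (fun t => t.2) ?_ ?_
      · rintro ⟨t, p⟩ ht
        simp only [coe_filter, mem_filter, Set.mem_ofPred_eq] at ht
        obtain ⟨⟨h1, _⟩, rfl⟩ := ht
        simpa [D] using h1
      · rintro ⟨t, p⟩ ht ⟨t', p'⟩ ht' h
        simp only [coe_filter, mem_filter, Set.mem_ofPred_eq] at ht ht' h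
        rw [ht.2, ht'.2, h]
  have hsum := card_filter_add_card_filter_not (s := T)
    (fun t => 4 * Fintype.card V < (D t.1).card)
  have hheavy : (univ : Finset (V × V)).card <
      (T.filter (fun t => 4 * Fintype.card V < (D t.1).card)).card := by
    rw [card_univ, Fintype.card_prod]
    nlinarith
  obtain ⟨⟨x, a, b⟩, hx, ⟨y, a', b'⟩, hy, hne, heq⟩ :=
    exists_ne_map_eq_of_card_lt_of_maps_to hheavy (f := fun t => t.2) (fun _ _ => mem_univ _)
  simp only [Prod.mk.injEq] at heq
  obtain ⟨rfl, rfl⟩ := heq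
  simp only [mem_filter] at hx hy
  obtain ⟨⟨a1, b1⟩, h1, h1a, h1b⟩ := avoid_aux (D x) {a} {b} (by simp) (by simp) hx.2
  obtain ⟨⟨a2, b2⟩, h2, h2a, h2b⟩ := avoid_aux (D y) {a, a1} {b, b1} card_le_two card_le_two hy.2
  simp only [mem_insert, mem_singleton, not_or] at h1a h1b h2a h2b
  refine ⟨x, y, a, b, a1, b1, a2, b2, ?_, h1a, h1b, h2a.1, h2a.2, h2b.1, h2b.2, hx.1, hy.1, ?_, ?_⟩
  · rintro rfl
    exact hne rfl
  · simpa [D] using h1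
  · simpa [D] using h2

theorem M_copy_in_tripartite (V : Type) [Fintype V] [DecidableEq V]
    (H : Finset (Finset V)) (m : ℕ) (d : ℝ)
    (hcard : Fintype.card V = m) (huniform : ∀ e ∈ H, e.card = 3)
    (W : Fin 3 → Finset V)
    (hdisj : ∀ i j, i ≠ j → Disjoint (W i) (W j))
    (hcover : W 0 ∪ W 1 ∪ W 2 = Finset.univ)
    (hpartite : ∀ e ∈ H, ∀ i, (e ∩ W i).card = 1)
    (hedges : d * (m : ℝ) ^ 3 ≤ (H.card : ℝ))
    (hdm : 10 < 2 * d * m) :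
    ∀ i : Fin 3, ∃ g : Fin 8 → V, IsMCopy H g ∧
      ((Finset.univ.image g) ∩ W i).card = 2 ∧
      ∀ j, j ≠ i → ((Finset.univ.image g) ∩ W j).card = 3 := by
  intro i
  classical
  have hm : 5 * Fintype.card V ^ 2 < H.card := by
    rw [hcard]
    have hm0 : (0 : ℝ) < m := by
      rcases Nat.eq_zero_or_pos m with h | h
      · subst h
        norm_num at hdm
      · exact_mod_cast h
    have : (5 * m ^ 2 : ℝ) < H.card := by
      have h2 : (0 : ℝ) < (m : ℝ) ^ 2 := by positivity
      nlinarith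
    exact_mod_cast this
  have hij : i ≠ i + 1 := by revert i; decide
  have hik : i ≠ i + 2 := by revert i; decide
  have hjk : i + 1 ≠ i + 2 := by revert i; decide
  have hall : ∀ j, j = i ∨ j = i + 1 ∨ j = i + 2 := by revert i; decide
  let T : Finset (V × V × V) := univ.filter (fun t =>
    t.1 ∈ W i ∧ t.2.1 ∈ W (i + 1) ∧ t.2.2 ∈ W (i + 2) ∧ ({t.1, t.2.1, t.2.2} : Finset V) ∈ H)
  have d1 : ∀ v, v ∈ W i → v ∉ W (i + 1) :=
    fun v hv => Finset.disjoint_left.1 (hdisj _ _ hij) hv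
  have d2 : ∀ v, v ∈ W i → v ∉ W (i + 2) :=
    fun v hv => Finset.disjoint_left.1 (hdisj _ _ hik) hv
  have d3 : ∀ v, v ∈ W (i + 1) → v ∉ W (i + 2) :=
    fun v hv => Finset.disjoint_left.1 (hdisj _ _ hjk) hv
  have hHT : H ⊆ T.image (fun t => ({t.1, t.2.1, t.2.2} : Finset V)) := by
    intro e he
    obtain ⟨x, hx⟩ := card_eq_one.1 (hpartite e he i)
    obtain ⟨a, ha⟩ := card_eq_one.1 (hpartite e he (i + 1))
    obtain ⟨b, hb⟩ := card_eq_one.1 (hpartite e he (i + 2))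
    have hx' := mem_inter.1 (hx ▸ mem_singleton_self x : x ∈ e ∩ W i)
    have ha' := mem_inter.1 (ha ▸ mem_singleton_self a : a ∈ e ∩ W (i + 1))
    have hb' := mem_inter.1 (hb ▸ mem_singleton_self b : b ∈ e ∩ W (i + 2))
    have hxa : x ≠ a := fun h => d1 x hx'.2 (h ▸ ha'.2)
    have hxb : x ≠ b := fun h => d2 x hx'.2 (h ▸ hb'.2)
    have hab : a ≠ b := fun h => d3 a ha'.2 (h ▸ hb'.2)
    have hE : ({x, a, b} : Finset V) = e := by
      apply eq_of_subset_of_card_le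
      · intro v hv
        simp only [mem_insert, mem_singleton] at hv
        rcases hv with rfl | rfl | rfl
        exacts [hx'.1, ha'.1, hb'.1]
      · rw [huniform e he, card_eq_three.2 ⟨x, a, b, hxa, hxb, hab, rfl⟩]
    refine mem_image.2 ⟨(x, a, b), ?_, hE⟩
    simp only [T, mem_filter, mem_univ, true_and]
    exact ⟨hx'.2, ha'.2, hb'.2, hE ▸ he⟩
  have hTc := hm.trans_le ((card_le_card hHT).trans card_image_le)
  obtain ⟨x, y, a, b, a1, b1, a2, b2, hxy, n1, n2, n3, n4, n5, n6, t1, t2, t3, t4⟩ :=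
    triples_aux T hTc
  simp only [T, mem_filter, mem_univ, true_and] at t1 t2 t3 t4
  obtain ⟨wx, wa, wb, e1⟩ := t1
  obtain ⟨wy, -, -, e2⟩ := t2
  obtain ⟨-, wa1, wb1, e3⟩ := t3
  obtain ⟨-, wa2, wb2, e4⟩ := t4
  have himg : univ.image ![a1, b1, x, a, b, y, a2, b2] =
      ({a1, b1, x, a, b, y, a2, b2} : Finset V) := by
    ext v
    simp only [mem_image, mem_univ, true_and, Fin.exists_fin_succ, mem_insert, mem_singleton]
    simp [eq_comm]
  have c0 : univ.image ![a1, b1, x, a, b, y, a2, b2] ∩ W i = {x, y} := by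
    rw [himg]; ext v
    simp only [mem_inter, mem_insert, mem_singleton]
    grind
  have c1 : univ.image ![a1, b1, x, a, b, y, a2, b2] ∩ W (i + 1) = {a, a1, a2} := by
    rw [himg]; ext v
    simp only [mem_inter, mem_insert, mem_singleton]
    grind
  have c2 : univ.image ![a1, b1, x, a, b, y, a2, b2] ∩ W (i + 2) = {b, b1, b2} := by
    rw [himg]; ext v
    simp only [mem_inter, mem_insert, mem_singleton]
    grind
  have k1 : ({a, a1, a2} : Finset V).card = 3 :=
    card_eq_three.2 ⟨a, a1, a2, n1.symm, n3.symm, n4.symm, rfl⟩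
  have k2 : ({b, b1, b2} : Finset V).card = 3 :=
    card_eq_three.2 ⟨b, b1, b2, n2.symm, n5.symm, n6.symm, rfl⟩
  have perm : ∀ u v w : V, ({u, v, w} : Finset V) = {v, w, u} := by
    intro u v w
    ext z
    simp only [mem_insert, mem_singleton]
    tauto
  refine ⟨![a1, b1, x, a, b, y, a2, b2], ⟨?_, ?_, ?_, ?_, ?_⟩, ?_, ?_⟩
  · have hnd : (List.ofFn ![a1, b1, x, a, b, y, a2, b2]).Nodup := by
      simp only [List.ofFn_succ, List.ofFn_zero]
      have q1 : ∀ u v, u ∈ W i → v ∈ W (i + 1) → u ≠ v := fun u v hu hv h => d1 u hu (h ▸ hv)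
      have q2 : ∀ u v, u ∈ W i → v ∈ W (i + 2) → u ≠ v := fun u v hu hv h => d2 u hu (h ▸ hv)
      have q3 : ∀ u v, u ∈ W (i + 1) → v ∈ W (i + 2) → u ≠ v :=
        fun u v hu hv h => d3 u hu (h ▸ hv)
      simp [hxy, n1, n2, n3.symm, n4.symm, n5.symm, n6.symm,
        q1 x a wx wa, (q1 x a1 wx wa1).symm, q1 x a2 wx wa2,
        (q1 y a wy wa).symm, (q1 y a1 wy wa1).symm, q1 y a2 wy wa2,
        q2 x b wx wb, (q2 x b1 wx wb1).symm, q2 x b2 wx wb2,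
        (q2 y b wy wb).symm, (q2 y b1 wy wb1).symm, q2 y b2 wy wb2,
        q3 a b wa wb, (q3 a b1 wa wb1).symm, q3 a b2 wa wb2,
        q3 a1 b wa1 wb, q3 a1 b1 wa1 wb1, q3 a1 b2 wa1 wb2,
        (q3 a2 b wa2 wb).symm, (q3 a2 b1 wa2 wb1).symm, q3 a2 b2 wa2 wb2]
    exact List.nodup_ofFn.1 hnd
  · change ({a1, b1, x} : Finset V) ∈ H
    rw [← perm]; exact e3
  · exact e1
  · change ({a, b, y} : Finset V) ∈ H
    rw [← perm]; exact e2
  · exact e4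
  · rw [c0, card_pair hxy]
  · intro j hj
    rcases hall j with rfl | rfl | rfl
    · exact absurd rfl hj
    · rw [c1, k1]
    · rw [c2, k2]
end
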